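/- arXiv:2010.14801 — 6 statements merged into one kernel-verified Lean document; each statement's English description precedes it below -/
import Mathlib

section
/- There exist absolute constants c₁, c₂, c₃ > 0 such that for every ε ∈ (0, 1/2) and every sufficiently large k there exists a matrix B ∈ ℝ^{n×n}, n = 2^k, with rows and columns indexed by {0,1}^k, satisfying: (i) for every x ∈ {0,1}^k, the number of y ∈ {0,1}^k with B_{x,y} ≠ H^k_{x,y} is at most n^{c₁ ε log₂(1/ε)}; (ii) rank(B) ≤ n^{1 − c₂ ε²}; (iii) max_{x,y} |B_{x,y}| ≤ n^{1/2 + c₃ ε log₂(1/ε)}. -/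
/-- The Walsh–Hadamard matrix `H^k ∈ {−1,1}^{2^k × 2^k}`, with rows and columns indexed
by boolean vectors `x, y ∈ {0,1}^k`, and entries `H^k_{x,y} = (−1)^{∑ x_i y_i}`. -/
def walshHadamard (k : ℕ) : Matrix (Fin k → Bool) (Fin k → Bool) ℝ :=
  Matrix.of fun x y => (-1 : ℝ) ^ (Finset.univ.filter fun i => x i && y i).card

open Finset

def wLow (k s : ℕ) : Finset (Finset (Fin k)) := univ.filter fun S => #S ≤ s

lemma wLow_card (k s : ℕ) (q : ℝ) (h0 : 0 < q) (h1 : q ≤ 1) :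
    (#(wLow k s) : ℝ) * q ^ s ≤ (1 + q) ^ k := by
  have h := Fin.sum_pow_mul_eq_add_pow (n := k) q (1 : ℝ)
  rw [add_comm, ← h, ← nsmul_eq_mul, ← sum_const]
  refine (sum_le_sum (f := fun _ => q ^ s) (g := fun S => q ^ #S * 1 ^ (k - #S)) ?_).trans ?_
  · intro S hS
    simp only [wLow, mem_filter, mem_univ, true_and] at hS
    simpa using pow_le_pow_of_le_one h0.le h1 hS
  · apply sum_le_sum_of_subset_of_nonneg (subset_univ _)
    intros; positivity

lemma w_rank_add {m n : Type*} [Fintype m] [Fintype n] (A B : Matrix m n ℝ) :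
    (A + B).rank ≤ A.rank + B.rank := by
  unfold Matrix.rank
  refine le_trans (Submodule.finrank_mono ?_)
    (Submodule.finrank_add_le_finrank_add_finrank A.mulVecLin.range B.mulVecLin.range)
  rw [Matrix.mulVecLin_add]
  exact LinearMap.range_add_le _ _

noncomputable def wp (t a z : ℕ) : ℝ :=
  (-1) ^ a * ∑ j ∈ range (t + 1), (-2 : ℝ) ^ j * ((Ring.choose ((z : ℤ) - a) j : ℤ) : ℝ)

lemma wp_exact (t a z : ℕ) (h1 : a ≤ z) (h2 : z ≤ a + t) : wp t a z = (-1) ^ z := by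
  obtain ⟨d, rfl⟩ := Nat.exists_eq_add_of_le h1
  have hd : d ≤ t := by omega
  have : ((a + d : ℕ) : ℤ) - a = (d : ℤ) := by push_cast; ring
  unfold wp
  rw [this]
  simp only [Ring.choose_natCast]
  have h3 : ∑ j ∈ range (t + 1), (-2 : ℝ) ^ j * (((d.choose j : ℕ) : ℤ) : ℝ)
      = ∑ j ∈ range (d + 1), (-2 : ℝ) ^ j * (((d.choose j : ℕ) : ℤ) : ℝ) := by
    symm
    apply sum_subset
    · intro j; simp only [mem_range]; omega
    · intro j _ hj
      simp only [mem_range, not_lt] at hj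
      rw [Nat.choose_eq_zero_of_lt (by omega)]; simp
  have h4 := add_pow (-2 : ℝ) 1 d
  rw [h3, pow_add]
  congr 1
  norm_num at h4
  rw [h4]
  simp

lemma wp_bound (t a z : ℕ) (h1 : z < a) :
    |wp t a z| ≤ (2 : ℝ) ^ (t + 1) * ((a + t).choose t : ℕ) := by
  unfold wp
  rw [abs_mul, abs_pow]
  simp only [abs_neg, abs_one, one_pow, one_mul]
  refine (abs_sum_le_sum_abs _ _).trans ?_
  have hb : ∀ j ∈ range (t + 1), |(-2 : ℝ) ^ j * ((Ring.choose ((z : ℤ) - a) j : ℤ) : ℝ)|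
      ≤ (2 : ℝ) ^ j * ((a + t).choose t : ℕ) := by
    intro j hj
    rw [mem_range] at hj
    obtain ⟨d, rfl⟩ := Nat.exists_eq_add_of_lt h1
    have e1 : (z : ℤ) - ((z + d + 1 : ℕ) : ℤ) = -((d + 1 : ℕ) : ℤ) := by push_cast; ring
    have e2 : (((d + 1 : ℕ) : ℤ) + (j : ℤ) - 1) = ((d + j : ℕ) : ℤ) := by push_cast; ring
    rw [e1, Ring.choose_neg, e2, Ring.choose_natCast, abs_mul, abs_pow]
    have e3 : |(-2 : ℝ)| = 2 := by norm_num
    rw [e3]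
    gcongr
    have e4 : |(((Int.negOnePow (j : ℤ)) • (((d + j).choose j : ℕ) : ℤ) : ℤ) : ℝ)|
        = ((d + j).choose j : ℕ) := by
      rw [← Int.cast_abs, Units.smul_def, smul_eq_mul, abs_mul]
      simp
    rw [e4]
    norm_cast
    calc (d + j).choose j = (d + j).choose d := by
            rw [Nat.choose_symm_add]
      _ ≤ (d + t).choose d := Nat.choose_le_choose _ (by omega)
      _ = (d + t).choose t := by rw [Nat.choose_symm_add]
      _ ≤ _ := Nat.choose_le_choose _ (by omega)
  refine (sum_le_sum hb).trans ?_
  rw [← sum_mul]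
  gcongr
  have := geom_sum_eq (x := (2 : ℝ)) (by norm_num) (t + 1)
  rw [this]; norm_num

lemma wp_expand (t a : ℕ) : ∃ α : ℕ → ℝ, ∀ z : ℕ,
    wp t a z = ∑ i ∈ range (t + 1), α i * (z.choose i : ℕ) := by
  refine ⟨fun i => (-1) ^ a * ∑ j ∈ range (t + 1), if i ≤ j then
    (-2 : ℝ) ^ j * ((Ring.choose (-(a : ℤ)) (j - i) : ℤ) : ℝ) else 0, fun z => ?_⟩
  unfold wp
  simp_rw [mul_assoc, ← mul_sum, sum_mul]
  congr 1
  rw [sum_comm]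
  refine sum_congr rfl fun j hj => ?_
  rw [mem_range] at hj
  rw [sub_eq_add_neg, Ring.add_choose_eq j (Commute.all _ _),
    Nat.sum_antidiagonal_eq_sum_range_succ (fun p q => Ring.choose (z : ℤ) p * Ring.choose (-(a : ℤ)) q) j]
  push_cast
  rw [mul_sum]
  have : range (j + 1) ⊆ range (t + 1) := by
    intro i; simp only [mem_range]; omega
  rw [← sum_subset this]
  · refine sum_congr rfl fun i hi => ?_
    rw [mem_range] at hi
    rw [if_pos (by omega), Ring.choose_natCast]
    push_cast; ring
  · intro i _ hi
    rw [mem_range] at hi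
    rw [if_neg (by omega), zero_mul]

def wsp {k : ℕ} (x : Fin k → Bool) : Finset (Fin k) := univ.filter fun i => x i = true

lemma wsp_inj {k : ℕ} : Function.Injective (wsp (k := k)) := by
  intro x y h
  ext i
  have := congrArg (fun S => i ∈ S) h
  simp only [wsp, mem_filter, mem_univ, true_and, eq_iff_iff] at this
  exact Bool.eq_iff_iff.2 this

lemma wH {k : ℕ} (x y : Fin k → Bool) : walshHadamard k x y = (-1) ^ #(wsp x ∩ wsp y) := by
  unfold walshHadamard wsp
  simp [filter_and]

noncomputable def wP (k t a : ℕ) : Matrix (Fin k → Bool) (Fin k → Bool) ℝ :=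
  Matrix.of fun x y => wp t a #(wsp x ∩ wsp y)

lemma wP_rank (k t a : ℕ) : (wP k t a).rank ≤ #(wLow k t) := by
  obtain ⟨α, hα⟩ := wp_expand t a
  let U : Matrix (Fin k → Bool) (wLow k t) ℝ := Matrix.of fun x S =>
    if S.1 ⊆ wsp x then α #S.1 else 0
  let V : Matrix (wLow k t) (Fin k → Bool) ℝ := Matrix.of fun S y =>
    if S.1 ⊆ wsp y then 1 else 0
  have h : wP k t a = U * V := by
    ext x y
    rw [Matrix.mul_apply]
    simp only [U, V, wP, Matrix.of_apply]
    rw [hα]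
    have e1 : ∀ S : wLow k t, ((if S.1 ⊆ wsp x then α #S.1 else 0) * if S.1 ⊆ wsp y then 1 else 0 : ℝ)
        = if S.1 ⊆ wsp x ∩ wsp y then α #S.1 else 0 := by
      intro S
      simp only [subset_inter_iff]
      split_ifs <;> simp_all
    simp_rw [e1]
    rw [sum_coe_sort (wLow k t) (fun S => if S ⊆ wsp x ∩ wsp y then α #S else 0)]
    rw [← sum_filter]
    rw [← sum_fiberwise_of_maps_to (t := range (t + 1)) (g := fun S => #S)]
    · refine sum_congr rfl fun i hi => ?_
      rw [mem_range] at hi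
      rw [sum_congr rfl (g := fun _ => α i), sum_const, nsmul_eq_mul, mul_comm, ← card_powersetCard]
      · congr 3
        ext S
        simp only [wLow, mem_powersetCard, mem_filter, mem_univ, true_and]
        constructor
        · rintro ⟨h1, h2⟩; exact ⟨⟨by omega, h1⟩, h2⟩
        · rintro ⟨⟨_, h1⟩, h2⟩; exact ⟨h1, h2⟩
      · intro S hS
        rw [(mem_filter.1 hS).2]
    · intro S hS
      simp only [wLow, mem_filter, mem_univ, true_and] at hS
      simp only [mem_range]; omega
  rw [h]
  refine (Matrix.rank_mul_le_left _ _).trans ?_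
  simpa using Matrix.rank_le_card_width U

lemma w_main (k t a : ℕ) (h : a + 2 * t = k) :
    ∃ B : Matrix (Fin k → Bool) (Fin k → Bool) ℝ,
      (∀ x, Nat.card {y // B x y ≠ walshHadamard k x y} ≤ #(wLow k (3 * a))) ∧
      B.rank ≤ 4 * #(wLow k t) ∧
      (∀ x y, |B x y| ≤ (2 : ℝ) ^ (t + 1) * ((a + t).choose t : ℕ)) := by
  classical
  let r : (Fin k → Bool) → ℝ := fun x => if wsp x ∈ wLow k t ∨ (wsp x)ᶜ ∈ wLow k t then 1 else 0
  let c : (Fin k → Bool) → ℝ := fun x => if wsp x ∈ wLow k t then 1 else 0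
  let D := walshHadamard k - wP k t a
  let B : Matrix (Fin k → Bool) (Fin k → Bool) ℝ :=
    wP k t a + Matrix.diagonal r * D + (Matrix.diagonal (1 - r) * D) * Matrix.diagonal c
  have hB : ∀ x y, B x y = if (wsp x ∈ wLow k t ∨ (wsp x)ᶜ ∈ wLow k t) ∨ wsp y ∈ wLow k t
      then walshHadamard k x y else wp t a #(wsp x ∩ wsp y) := by
    intro x y
    simp only [B, D, Matrix.add_apply, Matrix.mul_diagonal, Matrix.diagonal_mul, Matrix.sub_apply,
      r, c, Pi.sub_apply, Pi.one_apply]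
    by_cases h1 : wsp x ∈ wLow k t ∨ (wsp x)ᶜ ∈ wLow k t
    · simp [h1]
    · by_cases h2 : wsp y ∈ wLow k t
      · simp [h1, h2]
      · simp [h1, h2, wP]
  have hle : ∀ x y, (wsp x)ᶜ ∉ wLow k t → #(wsp x ∩ wsp y) ≤ a + t := by
    intro x y hx
    simp only [wLow, mem_filter, mem_univ, true_and, card_compl, Fintype.card_fin] at hx
    have := card_le_card (inter_subset_left : wsp x ∩ wsp y ⊆ wsp x)
    omega
  have hge1 : (1 : ℝ) ≤ (2 : ℝ) ^ (t + 1) * ((a + t).choose t : ℕ) := by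
    have h1 : 1 ≤ (a + t).choose t := Nat.choose_pos (by omega)
    have h2 : 1 ≤ 2 ^ (t + 1) := Nat.one_le_two_pow
    exact_mod_cast Nat.mul_le_mul h2 h1
  refine ⟨B, ?_, ?_, ?_⟩
  · intro x
    rw [Nat.card_eq_fintype_card, Fintype.card_subtype]
    refine card_le_card_of_injOn (fun y => symmDiff (wsp y) (wsp x)ᶜ) (fun y hy => ?_)
      (Function.Injective.injOn ?_)
    · simp only [coe_filter, mem_univ, true_and, Set.mem_ofPred_eq] at hy
      rw [hB] at hy
      split_ifs at hy with h1
      · exact absurd rfl hy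
      push Not at h1
      have h2 : #(wsp x ∩ wsp y) < a := by
        by_contra h2
        exact hy (by rw [wp_exact _ _ _ (not_lt.1 h2) (hle x y h1.1.2), wH])
      obtain ⟨⟨g1, g2⟩, g3⟩ := h1
      simp only [wLow, mem_filter, mem_univ, true_and, not_le] at g1 g2 g3
      simp only [wLow, coe_filter, mem_univ, true_and, Set.mem_ofPred_eq]
      have u1 : symmDiff (wsp y) (wsp x)ᶜ = (wsp x ∩ wsp y) ∪ ((wsp x)ᶜ \ wsp y) := by
        ext i
        simp only [mem_symmDiff, mem_compl, mem_union, mem_inter, mem_sdiff]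
        tauto
      have u2 := card_union_le (wsp x ∩ wsp y) ((wsp x)ᶜ \ wsp y)
      have u3 := card_sdiff_add_card_inter (wsp x)ᶜ (wsp y)
      have u4 := card_sdiff_add_card_inter (wsp y) (wsp x)
      have u5 : wsp y \ wsp x = (wsp x)ᶜ ∩ wsp y := by
        ext i
        simp only [mem_compl, mem_inter, mem_sdiff]
        tauto
      rw [u5, inter_comm (wsp y)] at u4
      have u6 := card_add_card_compl (wsp x)
      rw [Fintype.card_fin] at u6
      rw [u1]
      omega
    · exact (symmDiff_left_injective _).comp wsp_inj
  · have r1 : (Matrix.diagonal r).rank ≤ 2 * #(wLow k t) := by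
      rw [Matrix.rank_diagonal, Fintype.card_subtype]
      have : univ.filter (fun x => r x ≠ 0) ⊆
          univ.filter (fun x => wsp x ∈ wLow k t) ∪ univ.filter (fun x => (wsp x)ᶜ ∈ wLow k t) := by
        intro x
        simp only [r, mem_filter, mem_union, mem_univ, true_and]
        split_ifs with h <;> simp [h]
      refine (card_le_card this).trans ((card_union_le _ _).trans ?_)
      rw [two_mul]
      refine add_le_add ?_ ?_
      · exact card_le_card_of_injOn wsp (fun x hx => by simpa using hx) wsp_inj.injOn
      · exact card_le_card_of_injOn (fun x => (wsp x)ᶜ) (fun x hx => by simpa using hx)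
          (compl_injective.comp wsp_inj).injOn
    have r2 : (Matrix.diagonal c).rank ≤ #(wLow k t) := by
      rw [Matrix.rank_diagonal, Fintype.card_subtype]
      refine card_le_card_of_injOn wsp (fun x hx => ?_) wsp_inj.injOn
      simpa [c] using hx
    have r3 := wP_rank k t a
    have r4 := w_rank_add (wP k t a + Matrix.diagonal r * D)
      ((Matrix.diagonal (1 - r) * D) * Matrix.diagonal c)
    have r5 := w_rank_add (wP k t a) (Matrix.diagonal r * D)
    have r6 := Matrix.rank_mul_le_left (Matrix.diagonal r) D
    have r7 := Matrix.rank_mul_le_right (Matrix.diagonal (1 - r) * D) (Matrix.diagonal c)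
    change (wP k t a + Matrix.diagonal r * D +
      (Matrix.diagonal (1 - r) * D) * Matrix.diagonal c).rank ≤ _
    omega
  · intro x y
    have hone : ∀ n : ℕ, |(-1 : ℝ) ^ n| = 1 := by intro n; simp [abs_pow]
    rw [hB]
    split_ifs with h1
    · rw [wH, hone]; exact hge1
    · push Not at h1
      rcases lt_or_ge #(wsp x ∩ wsp y) a with h2 | h2
      · exact wp_bound _ _ _ h2
      · rw [wp_exact _ _ _ h2 (hle x y h1.1.2), hone]; exact hge1

/-- Alman–Williams: there are absolute constants `c₁, c₂, c₃ > 0` such that for every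
`ε ∈ (0, 1/2)` and all sufficiently large `k` there is a matrix `B ∈ ℝ^{n×n}`, `n = 2^k`,
differing from `H^k` in at most `n^{c₁ ε log₂(1/ε)}` entries of each row, with
`rank B ≤ n^{1 - c₂ ε²}` and `max |B_{x,y}| ≤ n^{1/2 + c₃ ε log₂(1/ε)}`. -/
theorem walsh_hadamard_nonrigid :
    ∃ c₁ : ℝ, 0 < c₁ ∧ ∃ c₂ : ℝ, 0 < c₂ ∧ ∃ c₃ : ℝ, 0 < c₃ ∧
      ∀ ε : ℝ, 0 < ε → ε < 1 / 2 → ∃ K : ℕ, ∀ k : ℕ, K ≤ k →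
        ∃ B : Matrix (Fin k → Bool) (Fin k → Bool) ℝ,
          (∀ x, (Nat.card {y // B x y ≠ walshHadamard k x y} : ℝ) ≤
              ((2 : ℝ) ^ k) ^ (c₁ * ε * Real.logb 2 (1 / ε))) ∧
          (B.rank : ℝ) ≤ ((2 : ℝ) ^ k) ^ (1 - c₂ * ε ^ 2) ∧
          (∀ x y, |B x y| ≤ ((2 : ℝ) ^ k) ^ ((1 : ℝ) / 2 + c₃ * ε * Real.logb 2 (1 / ε))) := by
  refine ⟨11, by norm_num, 1, by norm_num, 7, by norm_num, fun ε h0 h1 => ?_⟩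
  refine ⟨⌈5 / ε ^ 2⌉₊, fun k hk => ?_⟩
  have hk1 : 5 ≤ ε ^ 2 * k := by
    have := (Nat.le_ceil _).trans (Nat.cast_le (α := ℝ).2 hk)
    rw [div_le_iff₀ (by positivity)] at this
    linarith
  have hk2 : 10 ≤ ε * k := by
    have h : 0 ≤ ε * k := by positivity
    nlinarith
  set t : ℕ := ⌊(1 / 2 - ε) * k⌋₊ with ht
  have ht1 : (t : ℝ) ≤ (1 / 2 - ε) * k :=
    Nat.floor_le (mul_nonneg (by linarith) (Nat.cast_nonneg _))
  have ht2 : (1 / 2 - ε) * k < t + 1 := Nat.lt_floor_add_one _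
  have ht3 : 2 * t ≤ k := by
    have : (2 * t : ℝ) ≤ k := by nlinarith
    exact_mod_cast this
  obtain ⟨a, ha⟩ : ∃ a, a + 2 * t = k := ⟨k - 2 * t, by omega⟩
  have ha' : (a : ℝ) + 2 * t = k := by exact_mod_cast ha
  have ha1 : (a : ℝ) ≤ 3 * (ε * k) := by nlinarith
  obtain ⟨B, b1, b2, b3⟩ := w_main k t a ha
  set L := Real.logb 2 (1 / ε) with hL
  set l := Real.log 2 with hl
  have l1 : 0.69 < l := by have := Real.log_two_gt_d9; linarith
  have l2 : l < 0.7 := by have := Real.log_two_lt_d9; linarith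
  have hLl : L * l = -Real.log ε := by
    rw [hL, Real.logb, one_div, Real.log_inv, hl]
    field_simp
  have hL1 : 1 ≤ L := by
    rw [hL, Real.le_logb_iff_rpow_le (by norm_num) (by positivity), Real.rpow_one,
      le_div_iff₀ h0]
    linarith
  have hεe : ε = Real.exp (-(L * l)) := by rw [hLl, neg_neg, Real.exp_log h0]
  have hrp : ∀ w : ℝ, ((2 : ℝ) ^ k) ^ w = Real.exp (k * l * w) := by
    intro w
    rw [Real.rpow_def_of_pos (by positivity), Real.log_pow]
  have h1ε : ∀ n : ℕ, n ≤ k → (1 + ε) ^ n ≤ Real.exp (ε * k) := by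
    intro n hn
    calc (1 + ε) ^ n ≤ (1 + ε) ^ k := pow_le_pow_right₀ (by linarith) hn
      _ ≤ (Real.exp ε) ^ k := by
        have := Real.add_one_le_exp ε
        gcongr; linarith
      _ = _ := by rw [← Real.exp_nat_mul, mul_comm]
  have hdiv : ∀ (N : ℝ) (n : ℕ), N * ε ^ n ≤ Real.exp (ε * k) →
      N ≤ Real.exp (ε * k + n * (L * l)) := by
    intro N n h
    have e1 : ε ^ n = Real.exp (-(n * (L * l))) := by
      conv_lhs => rw [hεe]
      rw [← Real.exp_nat_mul]; congr 1; ring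
    rw [e1, Real.exp_neg, ← div_eq_mul_inv, div_le_iff₀ (Real.exp_pos _), ← Real.exp_add] at h
    exact h
  have hLl0 : 0.69 ≤ L * l := by nlinarith
  have haL : (a : ℝ) * (L * l) ≤ 3 * (ε * k) * (L * l) :=
    mul_le_mul_of_nonneg_right ha1 (by linarith)
  have hεL : 0.69 * (ε * k) ≤ (ε * k) * (L * l) := by nlinarith
  refine ⟨B, fun x => ?_, ?_, fun x y => ?_⟩
  · refine (Nat.cast_le (α := ℝ).2 (b1 x)).trans ?_
    refine (hdiv _ _ ((wLow_card k (3 * a) ε h0 (by linarith)).trans (h1ε k le_rfl))).trans ?_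
    rw [hrp, Real.exp_le_exp]
    push_cast
    nlinarith
  · refine (Nat.cast_le (α := ℝ).2 b2).trans ?_
    have c1 := wLow_card k t (Real.exp (-(4 * ε))) (Real.exp_pos _)
      (Real.exp_le_one_iff.2 (by linarith))
    have c2 : 1 + Real.exp (-(4 * ε)) ≤ Real.exp (l - 2 * ε + 2 * ε ^ 2) := by
      have e1 := Real.cosh_le_exp_half_sq (2 * ε)
      have e2 : 1 + Real.exp (-(4 * ε)) = 2 * Real.exp (-(2 * ε)) * Real.cosh (2 * ε) := by
        rw [Real.cosh_eq]
        have i1 : Real.exp (-(4 * ε)) = Real.exp (-(2 * ε)) * Real.exp (-(2 * ε)) := by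
          rw [← Real.exp_add]; congr 1; ring
        have i2 : Real.exp (-(2 * ε)) * Real.exp (2 * ε) = 1 := by
          rw [← Real.exp_add]; simp
        rw [i1]; linear_combination -i2
      have e3 : Real.exp (l - 2 * ε + 2 * ε ^ 2) =
          2 * Real.exp (-(2 * ε)) * Real.exp ((2 * ε) ^ 2 / 2) := by
        have i3 : Real.exp l = 2 := Real.exp_log (by norm_num)
        have i4 : l - 2 * ε + 2 * ε ^ 2 = l + -(2 * ε) + (2 * ε) ^ 2 / 2 := by ring
        rw [i4, Real.exp_add, Real.exp_add, i3]
      rw [e2, e3]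
      gcongr
    have c3 := c1.trans (pow_le_pow_left₀ (by positivity) c2 k)
    rw [← Real.exp_nat_mul, ← Real.exp_nat_mul, mul_neg, Real.exp_neg, ← div_eq_mul_inv,
      div_le_iff₀ (Real.exp_pos _), ← Real.exp_add] at c3
    have c4 : (4 : ℝ) ≤ Real.exp (ε ^ 2 * k) := by
      have := Real.add_one_le_exp (ε ^ 2 * k)
      linarith
    rw [hrp]
    push_cast
    refine (mul_le_mul c4 c3 (Nat.cast_nonneg _) (Real.exp_pos _).le).trans ?_
    rw [← Real.exp_add, Real.exp_le_exp]
    have c5 : (t : ℝ) * (4 * ε) ≤ (1 / 2 - ε) * k * (4 * ε) := by gcongr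
    nlinarith
  · refine (b3 x y).trans ?_
    have d1 : (((a + t).choose t : ℕ) : ℝ) * ε ^ a ≤ Real.exp (ε * k) := by
      refine le_trans ?_ (h1ε (a + t) (by omega))
      rw [add_comm 1 ε, add_pow]
      have := single_le_sum (f := fun m => ε ^ m * 1 ^ (a + t - m) * (((a + t).choose m : ℕ) : ℝ))
        (s := range (a + t + 1)) (fun i _ => by positivity) (mem_range.2 (show a < a + t + 1 by omega))
      refine le_trans (le_of_eq ?_) this
      rw [Nat.choose_symm_add]
      simp [mul_comm]
    have d2 := hdiv _ _ d1
    have d3 : (2 : ℝ) ^ (t + 1) = Real.exp ((t + 1) * l) := by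
      rw [← Real.rpow_natCast, Real.rpow_def_of_pos (by norm_num), mul_comm]
      push_cast; rfl
    rw [d3, hrp]
    refine (mul_le_mul_of_nonneg_left d2 (Real.exp_pos _).le).trans ?_
    rw [← Real.exp_add, Real.exp_le_exp]
    have d4 : (t : ℝ) * l ≤ (1 / 2 * k) * l := by
      gcongr
      nlinarith
    nlinarith
end

section
/- For every p ∈ [1,2) there exists δ = δ(p) > 0 such that for every sufficiently large k there exists a matrix B ∈ ℝ^{n×n}, n = 2^k, with rank(B) ≤ n^{1−δ} and, for every row index x ∈ {0,1}^k, (n^{−1} ∑_{y ∈ {0,1}^k} |B_{x,y} − H^k_{x,y}|^p)^{1/p} ≤ n^{−δ}. -/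
lemma wh_gap (p : ℝ) (hp1 : 1 ≤ p) (hp2 : p < 2) :
    ∃ ρ h : ℝ, 0 < ρ ∧ ρ < 1 ∧ 0 < h ∧ h ≤ 1/3 ∧ ∀ t : ℝ, 5/3 - h ≤ t → t ≤ 5/3 →
      ((|-2 + 3 * t| ^ p + 1) / 2) * ((|2 - t| ^ p + 1) / 2) ≤ ρ * t ^ p := by
  have hp0 : 0 < p := by linarith
  have h1 : ((3:ℝ) ^ p + 1) / 2 < (5:ℝ) ^ (p/2) := by
    have hsc := Real.strictConcaveOn_rpow (p := p/2) (by linarith) (by linarith)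
    have := hsc.2 (show (9:ℝ) ∈ Set.Ici 0 by simp) (show (1:ℝ) ∈ Set.Ici 0 by simp) (by norm_num)
      (show (0:ℝ) < 1/2 by norm_num) (show (0:ℝ) < 1/2 by norm_num) (by norm_num)
    have h9 : (9:ℝ) ^ (p/2) = 3 ^ p := by
      rw [show (9:ℝ) = 3 ^ (2:ℝ) by norm_num, ← Real.rpow_mul (by norm_num)]
      congr 1; ring
    simp only [smul_eq_mul, Real.one_rpow, h9] at this
    norm_num at this ⊢
    linarith
  have h3 : (0:ℝ) < 3 ^ p := by positivity
  have h2 : (((3:ℝ) ^ p + 1) / 2) * (((1/3:ℝ) ^ p + 1) / 2) < (5/3:ℝ) ^ p := by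
    have e5 : (5:ℝ) ^ p = (5:ℝ) ^ (p/2) * (5:ℝ) ^ (p/2) := by
      rw [← Real.rpow_add (by norm_num)]; congr 1; ring
    rw [Real.div_rpow (by norm_num) (by norm_num), Real.div_rpow (by norm_num) (by norm_num),
      Real.one_rpow, e5, lt_div_iff₀ h3]
    have : (((3:ℝ) ^ p + 1) / 2) * ((1 / (3:ℝ) ^ p + 1) / 2) * 3 ^ p
      = (((3:ℝ) ^ p + 1) / 2) * (((3:ℝ) ^ p + 1) / 2) := by field_simp; ring
    rw [this]
    exact mul_lt_mul'' h1 h1 (by positivity) (by positivity)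
  have h5 : (0:ℝ) < (5/3) ^ p := by positivity
  obtain ⟨ρ, hρ1, hρ2⟩ := exists_between ((div_lt_one h5).2 h2)
  have hρ0 : 0 < ρ := lt_of_le_of_lt (by positivity) hρ1
  rw [div_lt_iff₀ h5] at hρ1
  let f : ℝ → ℝ := fun t => ((|-2 + 3 * t| ^ p + 1) / 2) * ((|2 - t| ^ p + 1) / 2) - ρ * |t| ^ p
  have hf : Continuous f := by
    have hc : Continuous (fun x : ℝ => x ^ p) := Real.continuous_rpow_const hp0.le
    have a1 : Continuous (fun t : ℝ => |-2 + 3 * t| ^ p) := hc.comp (by fun_prop)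
    have a2 : Continuous (fun t : ℝ => |2 - t| ^ p) := hc.comp (by fun_prop)
    have a3 : Continuous (fun t : ℝ => |t| ^ p) := hc.comp (by fun_prop)
    fun_prop
  have hf0 : f (5/3) < 0 := by
    simp only [f]
    rw [show |(-2:ℝ) + 3 * (5/3)| = 3 by norm_num, show |(2:ℝ) - 5/3| = 1/3 by norm_num [abs_of_pos],
      show |(5/3:ℝ)| = 5/3 by norm_num [abs_of_pos]]
    linarith
  obtain ⟨η, hη, hball⟩ := Metric.isOpen_iff.1 (isOpen_Iio.preimage hf) (5/3) hf0
  refine ⟨ρ, min (η/2) (1/3), hρ0, hρ2, by positivity, min_le_right _ _, fun t ht1 ht2 => ?_⟩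
  have hm1 := min_le_left (η/2) (1/3:ℝ)
  have hm2 := min_le_right (η/2) (1/3:ℝ)
  have : f t < 0 := hball (by rw [Metric.mem_ball, Real.dist_eq, abs_lt]; constructor <;> linarith)
  simp only [f] at this
  rw [abs_of_pos (show 0 < t by linarith)] at this
  linarith

lemma wh_count (k : ℕ) (u : ℝ) (hu : 0 ≤ u) (j D : ℕ) (hD : 2 * j + D = k) :
    (((Finset.univ : Finset (Finset (Fin k))).filter (fun S => S.card < j)).card : ℝ)
      ≤ Real.exp (-(u * D)) * (2 ^ k * Real.exp (k * (u ^ 2 / 2))) := by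
  have h1 : ∑ S : Finset (Fin k), Real.exp (-u) ^ S.card * Real.exp u ^ (k - S.card)
      = (Real.exp (-u) + Real.exp u) ^ k := by
    simpa using Finset.sum_pow_mul_eq_add_pow (Real.exp (-u)) (Real.exp u) (Finset.univ : Finset (Fin k))
  have h2 : (Real.exp (-u) + Real.exp u) ^ k ≤ 2 ^ k * Real.exp (k * (u ^ 2 / 2)) := by
    have := Real.cosh_le_exp_half_sq u
    rw [Real.cosh_eq] at this
    rw [Real.exp_nat_mul, ← mul_pow]
    apply pow_le_pow_left₀ (by positivity)
    linarith
  calc _ = Real.exp (-(u * D)) * ∑ S ∈ (Finset.univ : Finset (Finset (Fin k))).filter (fun S => S.card < j), Real.exp (u * D) := by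
        rw [Finset.sum_const, nsmul_eq_mul, mul_comm, mul_assoc, ← Real.exp_add]; simp
    _ ≤ Real.exp (-(u * D)) * ∑ S : Finset (Fin k), Real.exp (-u) ^ S.card * Real.exp u ^ (k - S.card) := by
        gcongr
        refine (Finset.sum_le_sum (g := fun S : Finset (Fin k) => Real.exp (-u) ^ S.card * Real.exp u ^ (k - S.card)) ?_).trans
          (Finset.sum_le_sum_of_subset_of_nonneg (Finset.filter_subset _ _) (fun _ _ _ => by positivity))
        intro S hS
        have hS := (Finset.mem_filter.1 hS).2
        obtain ⟨c, hc⟩ : ∃ c, k - S.card = S.card + D + c := ⟨k - S.card - (S.card + D), by omega⟩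
        rw [hc, ← Real.exp_nat_mul, ← Real.exp_nat_mul, ← Real.exp_add]
        apply Real.exp_le_exp.2
        push_cast
        have : 0 ≤ (c:ℝ) * u := by positivity
        nlinarith
    _ ≤ _ := by rw [h1]; gcongr

lemma wh_rank {ι κ : Type*} [Fintype ι] [Fintype κ] [DecidableEq ι] {σ : Type*} (T : Finset σ)
    (f : σ → ι → ℝ) (g : σ → κ → ℝ) :
    (Matrix.of fun x y => ∑ s ∈ T, f s x * g s y : Matrix ι κ ℝ).rank ≤ T.card := by
  have : (Matrix.of fun x y => ∑ s ∈ T, f s x * g s y : Matrix ι κ ℝ)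
      = (Matrix.of fun x (s : T) => f s x) * (Matrix.of fun (s : T) y => g s y) := by
    ext x y
    simp only [Matrix.of_apply, Matrix.mul_apply]
    exact (Finset.sum_coe_sort T (fun s => f s x * g s y)).symm
  rw [this]
  refine (Matrix.rank_mul_le_left _ _).trans ((Matrix.rank_le_card_width _).trans (by simp))

open Finset in
lemma wh_extrap (h : ℝ) (hh : 0 < h) : ∃ C : ℝ, 1 ≤ C ∧ ∀ D : ℕ, ∃ a t : ℕ → ℝ,
    (∀ i ∈ range (D+1), 5/3 - h ≤ t i ∧ t i ≤ 5/3) ∧ (∀ i ∈ range (D+1), |a i| ≤ C ^ (D+1)) ∧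
    ∀ m ≤ D, ∑ i ∈ range (D+1), a i * t i ^ m = 1 := by
  obtain ⟨M₀, hM₀⟩ := exists_nat_gt (1 / h)
  obtain ⟨M, hM, hM1⟩ : ∃ M : ℕ, 1 / h < M ∧ 1 ≤ M := by
    refine ⟨M₀ + 1, by push_cast; linarith, by omega⟩
  have hM1' : (1:ℝ) ≤ M := by exact_mod_cast hM1
  have hMh : 1 < M * h := by rwa [div_lt_iff₀ hh] at hM
  refine ⟨M * Real.exp 2, ?_, fun D => ?_⟩
  · have := Real.one_le_exp (show (0:ℝ) ≤ 2 by norm_num)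
    nlinarith
  set n : ℕ := M * (D + 1) with hn
  have hnD : D < n := by nlinarith
  have hn0 : (0:ℝ) < n := by exact_mod_cast (by omega : 0 < n)
  let c : ℝ := (2/3) / n
  let t : ℕ → ℝ := fun i => 5/3 - c * i
  let a : ℕ → ℝ := fun i => ∑ k ∈ range (D+1), (n.choose k : ℝ) * ((-1) ^ (k - i) * k.choose i)
  refine ⟨a, t, ?_, ?_, ?_⟩
  · intro i hi
    have hi : (i:ℝ) ≤ D + 1 := by exact_mod_cast (by have := mem_range.1 hi; omega)
    have hc : 0 < c := by positivity
    have hcn : c * n = 2/3 := by simp only [c]; field_simp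
    have hi0 : (0:ℝ) ≤ i := by positivity
    refine ⟨?_, ?_⟩
    · have h1 : c * i ≤ h := by
        have : (n:ℝ) = M * (D+1) := by rw [hn]; push_cast; ring
        rw [this] at hcn
        have h2 : c * i * M ≤ 2/3 := by
          calc c * i * M ≤ c * (D+1) * M := by gcongr
            _ = 2/3 := by rw [← hcn]; ring
        by_contra hcon
        push Not at hcon
        nlinarith
      simp only [t]; linarith
    · simp only [t]; nlinarith
  · intro i hi
    calc |a i| ≤ ∑ k ∈ range (D+1), |(n.choose k : ℝ) * ((-1) ^ (k - i) * k.choose i)| := abs_sum_le_sum_abs _ _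
      _ ≤ ∑ k ∈ range (D+1), (M:ℝ) ^ (D+1) * ((2 / M : ℝ) ^ k * 1 ^ (n - k) * n.choose k) := by
          refine sum_le_sum fun k hk => ?_
          have hk := mem_range.1 hk
          rw [abs_mul, abs_mul, abs_pow, abs_neg, abs_one, one_pow, one_mul, Nat.abs_cast, Nat.abs_cast]
          have h2 : (k.choose i : ℝ) ≤ 2 ^ k := by exact_mod_cast Nat.choose_le_two_pow k i
          have h3 : (2:ℝ) ^ k ≤ (M:ℝ) ^ (D+1) * (2 / M : ℝ) ^ k := by
            have : (M:ℝ) ^ k ≤ (M:ℝ) ^ (D+1) := pow_le_pow_right₀ hM1' (by omega)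
            rw [div_pow, mul_div_assoc', le_div_iff₀ (by positivity), mul_comm]
            gcongr
          calc (n.choose k : ℝ) * k.choose i ≤ n.choose k * ((M:ℝ) ^ (D+1) * (2 / M : ℝ) ^ k) := by
                gcongr; exact h2.trans h3
            _ = _ := by rw [one_pow]; ring
      _ = (M:ℝ) ^ (D+1) * ∑ k ∈ range (D+1), ((2 / M : ℝ) ^ k * 1 ^ (n - k) * n.choose k) := by
          rw [mul_sum]
      _ ≤ (M:ℝ) ^ (D+1) * ∑ k ∈ range (n+1), ((2 / M : ℝ) ^ k * 1 ^ (n - k) * n.choose k) := by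
          gcongr
      _ = (M:ℝ) ^ (D+1) * (2 / M + 1) ^ n := by rw [add_pow]
      _ ≤ (M:ℝ) ^ (D+1) * (Real.exp (2 / M)) ^ n := by
          gcongr; exact Real.add_one_le_exp _
      _ = (M * Real.exp 2) ^ (D+1) := by
          rw [mul_pow, hn, pow_mul, ← Real.exp_nat_mul]
          congr 4
          field_simp
  · intro m hm
    let P : Polynomial ℝ := (Polynomial.C (5/3) - Polynomial.C c * Polynomial.X) ^ m
    have hP : ∀ x, P.eval x = (5/3 - c * x) ^ m := by intro x; simp [P]
    have hdeg : P.natDegree ≤ m := by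
      refine (Polynomial.natDegree_pow_le).trans ?_
      have : (Polynomial.C (5/3) - Polynomial.C c * Polynomial.X : Polynomial ℝ).natDegree ≤ 1 := by
        compute_degree
      nlinarith
    have key := shift_eq_sum_fwdDiff_iter (1:ℝ) (fun x => P.eval x) n 0
    have e1 : P.eval ((0:ℝ) + n • (1:ℝ)) = 1 := by
      rw [hP]; simp only [c]; simp; field_simp; norm_num
    rw [e1, ← sum_subset (range_subset_range.2 (show D + 1 ≤ n + 1 by omega))] at key
    · rw [key]
      have : ∀ k ∈ range (D+1), n.choose k • (fwdDiff (1:ℝ))^[k] (fun x => P.eval x) 0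
          = ∑ i ∈ range (D+1), (n.choose k : ℝ) * ((-1) ^ (k - i) * k.choose i) * t i ^ m := by
        intro k hk
        have hk := mem_range.1 hk
        rw [fwdDiff_iter_eq_sum_shift, sum_subset (range_subset_range.2 (show k + 1 ≤ D + 1 by omega)), smul_sum]
        · refine sum_congr rfl fun i _ => ?_
          rw [hP]
          simp [t]
          ring
        · intro i _ hi
          have : k < i := by simpa using hi
          simp [Nat.choose_eq_zero_of_lt this]
      rw [sum_congr rfl this, sum_comm]
      refine sum_congr rfl fun i _ => ?_
      rw [sum_mul]
    · intro k _ hk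
      have : P.natDegree < k := by
        have : D + 1 ≤ k := by simpa using hk
        omega
      have := congrFun (Polynomial.fwdDiff_iter_eq_zero_of_degree_lt this) 0
      rw [this]; simp

def whA (x y : Bool) : ℝ := (if x then -1 else 1) * (if y then 1 else -2)
def whE (x y : Bool) : ℝ := (if x then -1 else 3) * (if y then 0 else 1)
def whF {k : ℕ} (t : ℝ) (x y : Fin k → Bool) : ℝ := ∏ i, (t * whE (x i) (y i) + whA (x i) (y i))

lemma whF_one {k : ℕ} (x y : Fin k → Bool) : walshHadamard k x y = whF 1 x y := by
  simp only [walshHadamard, Matrix.of_apply, whF]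
  rw [← Finset.prod_const, Finset.prod_filter]
  refine Finset.prod_congr rfl fun i _ => ?_
  cases x i <;> cases y i <;> norm_num [whA, whE]

def whT {k : ℕ} (S : Finset (Fin k)) (x y : Fin k → Bool) : ℝ :=
  (∏ i ∈ S, whE (x i) (y i)) * ∏ i ∈ Finset.univ \ S, whA (x i) (y i)

lemma whF_expand {k : ℕ} (t : ℝ) (x y : Fin k → Bool) :
    whF t x y = ∑ S : Finset (Fin k), t ^ S.card * whT S x y := by
  rw [whF, Finset.prod_add]
  simp only [Finset.powerset_univ]
  refine Finset.sum_congr rfl fun S _ => ?_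
  rw [Finset.prod_mul_distrib, Finset.prod_const, whT, mul_assoc]

lemma whT_split {k : ℕ} (S : Finset (Fin k)) : ∃ f g : (Fin k → Bool) → ℝ,
    ∀ x y, whT S x y = f x * g y := by
  refine ⟨fun x => (∏ i ∈ S, if x i then -1 else 3) * ∏ i ∈ Finset.univ \ S, (if x i then -1 else 1),
    fun y => (∏ i ∈ S, if y i then 0 else 1) * ∏ i ∈ Finset.univ \ S, (if y i then 1 else -2), fun x y => ?_⟩
  simp only [whT, whA, whE, Finset.prod_mul_distrib]
  ring

lemma whF_norm {k : ℕ} (p t : ℝ) (x : Fin k → Bool) :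
    ((2:ℝ) ^ k)⁻¹ * ∑ y, |whF t x y| ^ p =
      ((|2 - t| ^ p + 1) / 2) ^ (Finset.univ.filter fun i => x i = true).card *
      ((|-2 + 3 * t| ^ p + 1) / 2) ^ (k - (Finset.univ.filter fun i => x i = true).card) := by
  have h1 : ∑ y : Fin k → Bool, |whF t x y| ^ p
      = ∏ i, ∑ b : Bool, |t * whE (x i) b + whA (x i) b| ^ p := by
    rw [Finset.prod_univ_sum, Fintype.piFinset_univ]
    refine Finset.sum_congr rfl fun y _ => ?_
    rw [whF, Finset.abs_prod, Real.finsetProd_rpow _ _ (fun i _ => abs_nonneg _)]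
  have h2 : ((2:ℝ) ^ k)⁻¹ = ∏ i : Fin k, (2:ℝ)⁻¹ := by simp
  rw [h1, h2, ← Finset.prod_mul_distrib]
  have h3 : ∀ i, (2:ℝ)⁻¹ * ∑ b : Bool, |t * whE (x i) b + whA (x i) b| ^ p =
      if x i = true then (|2 - t| ^ p + 1) / 2 else (|-2 + 3 * t| ^ p + 1) / 2 := by
    intro i
    cases x i
    · simp [whE, whA]
      rw [show t * 3 + -2 = -2 + 3 * t by ring]; ring
    · simp [whE, whA]
      rw [show -t + 2 = 2 - t by ring]; ring
  simp only [h3]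
  rw [Finset.prod_ite, Finset.prod_const, Finset.prod_const]
  congr 2
  have := Finset.card_filter_add_card_filter_not (s := (Finset.univ : Finset (Fin k))) (fun i => x i = true)
  simp only [Finset.card_univ, Fintype.card_fin] at this
  omega

lemma wh_mid (p : ℝ) (hp1 : 1 ≤ p) (hp2 : p < 2) (ρ t : ℝ) (hρ : 0 < ρ) (ht1 : 4/3 ≤ t) (ht2 : t ≤ 5/3)
    (hg : ((|-2 + 3 * t| ^ p + 1) / 2) * ((|2 - t| ^ p + 1) / 2) ≤ ρ * t ^ p)
    (k j D : ℕ) (hk : 2 * j + D = k) (x : Fin k → Bool)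
    (hx : j ≤ (Finset.univ.filter fun i => x i = true).card) :
    ((2:ℝ) ^ k)⁻¹ * ∑ y, |whF t x y| ^ p ≤ (ρ * t ^ p) ^ j * 5 ^ D := by
  rw [whF_norm]
  have hw : (Finset.univ.filter fun i => x i = true).card ≤ k := by
    simpa using Finset.card_le_univ (Finset.univ.filter fun i => x i = true)
  set w := (Finset.univ.filter fun i => x i = true).card
  have hb0 : |-2 + 3 * t| = -2 + 3 * t := abs_of_pos (by linarith)
  have hb1 : |2 - t| = 2 - t := abs_of_pos (by linarith)
  have q0 : 1 ≤ (|-2 + 3 * t| ^ p + 1) / 2 := by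
    have : 1 ≤ |-2 + 3 * t| ^ p := Real.one_le_rpow (by rw [hb0]; linarith) (by linarith)
    linarith
  have q05 : (|-2 + 3 * t| ^ p + 1) / 2 ≤ 5 := by
    have h1 : |-2 + 3 * t| ^ p ≤ 3 ^ p := Real.rpow_le_rpow (abs_nonneg _) (by rw [hb0]; linarith) (by linarith)
    have h2 : (3:ℝ) ^ p ≤ 3 ^ (2:ℝ) := Real.rpow_le_rpow_of_exponent_le (by norm_num) hp2.le
    norm_num at h2
    linarith
  have q1 : (|2 - t| ^ p + 1) / 2 ≤ 1 := by
    have : |2 - t| ^ p ≤ 1 := Real.rpow_le_one (abs_nonneg _) (by rw [hb1]; linarith) (by linarith)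
    linarith
  have q10 : 0 ≤ (|2 - t| ^ p + 1) / 2 := by positivity
  set Q0 := (|-2 + 3 * t| ^ p + 1) / 2
  set Q1 := (|2 - t| ^ p + 1) / 2
  have hQ0 : 0 ≤ Q0 := by linarith
  calc Q1 ^ w * Q0 ^ (k - w) ≤ Q1 ^ j * Q0 ^ (j + D) := by
        apply mul_le_mul (pow_le_pow_of_le_one q10 q1 hx) (pow_le_pow_right₀ q0 (by omega))
          (by positivity) (by positivity)
    _ = (Q0 * Q1) ^ j * Q0 ^ D := by rw [pow_add, mul_pow]; ring
    _ ≤ _ := by gcongr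

open Finset in
lemma wh_key (p : ℝ) (hp1 : 1 ≤ p) (hp2 : p < 2) (ρ h C : ℝ) (hρ : 0 < ρ) (hh : h ≤ 1/3) (hC : 1 ≤ C)
    (hg : ∀ t : ℝ, 5/3 - h ≤ t → t ≤ 5/3 →
      ((|-2 + 3 * t| ^ p + 1) / 2) * ((|2 - t| ^ p + 1) / 2) ≤ ρ * t ^ p)
    (k j D : ℕ) (hk : 2 * j + D = k) (a t : ℕ → ℝ)
    (ht : ∀ i ∈ range (D+1), 5/3 - h ≤ t i ∧ t i ≤ 5/3) (ha : ∀ i ∈ range (D+1), |a i| ≤ C ^ (D+1))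
    (hat : ∀ m ≤ D, ∑ i ∈ range (D+1), a i * t i ^ m = 1) :
    ∃ B : Matrix (Fin k → Bool) (Fin k → Bool) ℝ,
      B.rank ≤ 3 * ((Finset.univ : Finset (Finset (Fin k))).filter (fun S => S.card < j)).card ∧
      ∀ x, ((2:ℝ) ^ k)⁻¹ * ∑ y, |B x y - walshHadamard k x y| ^ p ≤ (20 * C ^ 2) ^ (D+1) * ρ ^ j := by
  classical
  set N := ((Finset.univ : Finset (Finset (Fin k))).filter (fun S => S.card < j)).card with hN
  choose f g hfg using (fun S : Finset (Fin k) => whT_split S)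
  have htpos : ∀ i ∈ range (D+1), 0 < t i := fun i hi => by linarith [(ht i hi).1]
  let c : ℕ → ℝ := fun i => a i * (t i ^ j)⁻¹
  let lam : ℕ → ℝ := fun m => ∑ i ∈ range (D+1), c i * t i ^ m
  have hlam : ∀ m, j ≤ m → m ≤ j + D → lam m = 1 := by
    intro m h1 h2
    rw [← hat (m - j) (by omega)]
    refine sum_congr rfl fun i hi => ?_
    have := htpos i hi
    obtain ⟨r, rfl⟩ := Nat.exists_eq_add_of_le h1
    simp only [c, Nat.add_sub_cancel_left, pow_add]
    field_simp
  let E : (Fin k → Bool) → (Fin k → Bool) → ℝ := fun x y => ∑ i ∈ range (D+1), c i * whF (t i) x y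
  have hE : ∀ x y, E x y = ∑ S : Finset (Fin k), lam S.card * whT S x y := by
    intro x y
    simp only [E, whF_expand, lam, mul_sum, sum_mul]
    rw [sum_comm]
    refine sum_congr rfl fun S _ => sum_congr rfl fun i _ => by ring
  let T1 : Finset (Finset (Fin k)) := univ.filter (fun S => ¬ (j ≤ S.card ∧ S.card ≤ j + D))
  let T2 : Finset (Fin k → Bool) := univ.filter (fun x => (univ.filter fun i => x i = true).card < j)
  have hT1 : T1.card ≤ 2 * N := by
    have h1 : T1 ⊆ univ.filter (fun S : Finset (Fin k) => S.card < j) ∪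
        (univ.filter (fun S : Finset (Fin k) => S.card < j)).image (fun S => Sᶜ) := by
      intro S hS
      have hS := (mem_filter.1 hS).2
      rw [mem_union]
      by_cases hlt : S.card < j
      · left; simpa using hlt
      · right
        rw [mem_image]
        refine ⟨Sᶜ, ?_, compl_compl S⟩
        have := card_compl S
        have h4 := card_le_univ S
        simp only [Fintype.card_fin] at this h4
        rw [mem_filter]
        refine ⟨mem_univ _, ?_⟩
        omega
    refine (card_le_card h1).trans ((card_union_le _ _).trans ?_)
    have := card_image_le (s := univ.filter (fun S : Finset (Fin k) => S.card < j)) (f := fun S => Sᶜ)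
    omega
  have hT2 : T2.card ≤ N := by
    refine card_le_card_of_injOn (fun x => univ.filter fun i => x i = true) ?_ ?_
    · intro x hx
      have := (mem_filter.1 hx).2
      simpa using this
    · intro x _ y _ hxy
      ext i
      have := congrArg (fun S => i ∈ S) hxy
      simpa using this
  let F' : Finset (Fin k) ⊕ (Fin k → Bool) → (Fin k → Bool) → ℝ :=
    Sum.elim (fun S x => (1 - lam S.card) * f S x) (fun z x => if z = x then 1 else 0)
  let G' : Finset (Fin k) ⊕ (Fin k → Bool) → (Fin k → Bool) → ℝ :=
    Sum.elim (fun S y => g S y) (fun z y => E z y)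
  have hB : ∀ x y, ∑ s ∈ T1.disjSum T2, F' s x * G' s y
      = walshHadamard k x y - E x y + if x ∈ T2 then E x y else 0 := by
    intro x y
    rw [sum_disjSum]
    congr 1
    · rw [whF_one, whF_expand, hE, ← sum_sub_distrib]
      simp only [F', G', Sum.elim_inl]
      rw [sum_filter]
      refine sum_congr rfl fun S _ => ?_
      by_cases hS : j ≤ S.card ∧ S.card ≤ j + D
      · rw [if_neg (not_not.2 hS), hlam _ hS.1 hS.2]; ring
      · rw [if_pos hS, hfg]; ring
    · simp [F', G']
  refine ⟨Matrix.of fun x y => ∑ s ∈ T1.disjSum T2, F' s x * G' s y, ?_, ?_⟩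
  · refine (wh_rank _ _ _).trans ?_
    rw [card_disjSum]; omega
  intro x
  have hR : 0 ≤ (20 * C ^ 2) ^ (D+1) * ρ ^ j := by positivity
  by_cases hx : x ∈ T2
  · have : ∀ y, |Matrix.of (fun x y => ∑ s ∈ T1.disjSum T2, F' s x * G' s y) x y - walshHadamard k x y| ^ p = 0 := by
      intro y
      rw [Matrix.of_apply, hB, if_pos hx]
      rw [show walshHadamard k x y - E x y + E x y - walshHadamard k x y = 0 by ring, abs_zero,
        Real.zero_rpow (by linarith)]
    simp only [this]
    simpa using hR
  have hxw : j ≤ (Finset.univ.filter fun i => x i = true).card := by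
    simpa [T2] using hx
  have hy : ∀ y, |Matrix.of (fun x y => ∑ s ∈ T1.disjSum T2, F' s x * G' s y) x y - walshHadamard k x y| ^ p
      ≤ ((D+1:ℕ):ℝ) ^ (p-1) * ∑ i ∈ range (D+1), |c i| ^ p * |whF (t i) x y| ^ p := by
    intro y
    rw [Matrix.of_apply, hB, if_neg hx]
    have : walshHadamard k x y - E x y + 0 - walshHadamard k x y = - E x y := by ring
    rw [this, abs_neg]
    calc |E x y| ^ p ≤ (∑ i ∈ range (D+1), |c i * whF (t i) x y|) ^ p := by
          gcongr
          exact abs_sum_le_sum_abs _ _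
      _ ≤ _ := Real.rpow_sum_le_const_mul_sum_rpow _ _ hp1
      _ = _ := by
          rw [card_range]
          congr 1
          refine sum_congr rfl fun i _ => ?_
          rw [abs_mul, Real.mul_rpow (abs_nonneg _) (abs_nonneg _)]
  have hi : ∀ i ∈ range (D+1), |c i| ^ p * (((2:ℝ) ^ k)⁻¹ * ∑ y, |whF (t i) x y| ^ p)
      ≤ (C ^ 2) ^ (D+1) * ρ ^ j * 5 ^ D := by
    intro i hi
    have h0 := htpos i hi
    have hm := wh_mid p hp1 hp2 ρ (t i) hρ (by linarith [(ht i hi).1]) (ht i hi).2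
      (hg _ (ht i hi).1 (ht i hi).2) k j D hk x hxw
    have hA : |a i| ^ p ≤ (C ^ 2) ^ (D+1) := by
      have hC1 : 1 ≤ C ^ (D+1) := one_le_pow₀ hC
      calc |a i| ^ p ≤ (C ^ (D+1)) ^ p := Real.rpow_le_rpow (abs_nonneg _) (ha i hi) (by linarith)
        _ ≤ (C ^ (D+1)) ^ (2:ℝ) := Real.rpow_le_rpow_of_exponent_le hC1 hp2.le
        _ = _ := by rw [Real.rpow_two]; ring
    have hc : |c i| ^ p = |a i| ^ p * ((t i ^ p) ^ j)⁻¹ := by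
      simp only [c]
      rw [abs_mul, Real.mul_rpow (abs_nonneg _) (abs_nonneg _), abs_of_pos (by positivity : 0 < (t i ^ j)⁻¹),
        Real.inv_rpow (by positivity), ← Real.rpow_natCast, ← Real.rpow_natCast, ← Real.rpow_mul h0.le,
        ← Real.rpow_mul h0.le, mul_comm p]
    have htp : 0 < t i ^ p := by positivity
    rw [hc]
    calc _ ≤ |a i| ^ p * ((t i ^ p) ^ j)⁻¹ * ((ρ * t i ^ p) ^ j * 5 ^ D) := by gcongr
      _ = |a i| ^ p * (ρ ^ j * 5 ^ D) := by rw [mul_pow]; field_simp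
      _ ≤ (C ^ 2) ^ (D+1) * (ρ ^ j * 5 ^ D) := by gcongr
      _ = _ := by ring
  have hDp : ((D+1:ℕ):ℝ) ^ (p-1) ≤ ((D+1:ℕ):ℝ) := by
    conv_rhs => rw [← Real.rpow_one ((D+1:ℕ):ℝ)]
    exact Real.rpow_le_rpow_of_exponent_le (by simp) (by linarith)
  have hD2 : ((D+1:ℕ):ℝ) ≤ 2 ^ (D+1) := by exact_mod_cast Nat.lt_two_pow_self.le
  calc _ ≤ ((2:ℝ) ^ k)⁻¹ * ∑ y, ((D+1:ℕ):ℝ) ^ (p-1) * ∑ i ∈ range (D+1), |c i| ^ p * |whF (t i) x y| ^ p := by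
        gcongr with y
        exact hy y
    _ = ((D+1:ℕ):ℝ) ^ (p-1) * ∑ i ∈ range (D+1), |c i| ^ p * (((2:ℝ) ^ k)⁻¹ * ∑ y, |whF (t i) x y| ^ p) := by
        rw [← mul_sum, sum_comm, mul_left_comm, mul_sum]
        congr 1
        refine sum_congr rfl fun i _ => ?_
        rw [← mul_sum]; ring
    _ ≤ ((D+1:ℕ):ℝ) * ∑ i ∈ range (D+1), (C ^ 2) ^ (D+1) * ρ ^ j * 5 ^ D := by
        apply mul_le_mul hDp (sum_le_sum hi) _ (by positivity)
        exact sum_nonneg fun i _ => by positivity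
    _ = ((D+1:ℕ):ℝ) * (((D+1:ℕ):ℝ) * ((C ^ 2) ^ (D+1) * ρ ^ j * 5 ^ D)) := by
        rw [sum_const, card_range, nsmul_eq_mul]
    _ ≤ 2 ^ (D+1) * (2 ^ (D+1) * ((C ^ 2) ^ (D+1) * ρ ^ j * 5 ^ (D+1))) := by
        gcongr
        · norm_num
        · omega
    _ = _ := by
        rw [show (20:ℝ) * C ^ 2 = 2 * (2 * (C ^ 2 * 5)) by ring, mul_pow, mul_pow, mul_pow]; ring

/-- For every `p ∈ [1,2)` there is `δ > 0` such that for all sufficiently large `k` there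
is a matrix `B` of rank at most `n^{1-δ}`, `n = 2^k`, approximating each row of `H^k`
in normalized `ℓ_p` within `n^{-δ}`. -/
theorem walsh_hadamard_lp_approx (p : ℝ) (hp1 : 1 ≤ p) (hp2 : p < 2) :
    ∃ δ : ℝ, 0 < δ ∧ ∃ K : ℕ, ∀ k : ℕ, K ≤ k →
      ∃ B : Matrix (Fin k → Bool) (Fin k → Bool) ℝ,
        (B.rank : ℝ) ≤ ((2 : ℝ) ^ k) ^ (1 - δ) ∧
        ∀ x, (((2 : ℝ) ^ k)⁻¹ * ∑ y, |B x y - walshHadamard k x y| ^ p) ^ (1 / p) ≤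
          ((2 : ℝ) ^ k) ^ (-δ) := by
  obtain ⟨ρ, h, hρ0, hρ1, hh0, hh, hg⟩ := wh_gap p hp1 hp2
  obtain ⟨C, hC, hext⟩ := wh_extrap h hh0
  obtain ⟨l, hl⟩ : ∃ l, l = -Real.log ρ := ⟨_, rfl⟩
  obtain ⟨Λ, hΛ⟩ : ∃ Λ, Λ = Real.log (20 * C ^ 2) := ⟨_, rfl⟩
  have hl0 : 0 < l := by rw [hl]; linarith [Real.log_neg hρ0 hρ1]
  have hK1 : 1 < 20 * C ^ 2 := by nlinarith
  have hΛ0 : 0 < Λ := by rw [hΛ]; exact Real.log_pos hK1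
  have eρ : ρ = Real.exp (-l) := by rw [hl, neg_neg, Real.exp_log hρ0]
  have eK : 20 * C ^ 2 = Real.exp Λ := by rw [hΛ, Real.exp_log (by linarith)]
  obtain ⟨L, hL⟩ := exists_nat_gt (8 * Λ / l + 4)
  have hq : 0 < 8 * Λ / l := by positivity
  have hL4 : (4:ℝ) < L := by linarith
  have hL0 : (0:ℝ) < L := by linarith
  have hLΛ : 8 * Λ < L * l := by
    have : 8 * Λ / l < L := by linarith
    rwa [div_lt_iff₀ hl0] at this
  have hLn : 0 < L := by exact_mod_cast hL0
  obtain ⟨K, hK⟩ := exists_nat_gt (12 * (L:ℝ) ^ 2 + 8 * (2 * Λ + l / 2) / l)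
  have hδ : 0 < min (l / 16) (1 / (4 * (L:ℝ) ^ 2)) := by positivity
  refine ⟨min (l / 16) (1 / (4 * (L:ℝ) ^ 2)), hδ, K, fun k hk => ?_⟩
  have hδ1 := min_le_left (l / 16) (1 / (4 * (L:ℝ) ^ 2))
  have hδ2 := min_le_right (l / 16) (1 / (4 * (L:ℝ) ^ 2))
  set δ := min (l / 16) (1 / (4 * (L:ℝ) ^ 2))
  have hkK : (K:ℝ) ≤ k := by exact_mod_cast hk
  have hq2 : 0 < 8 * (2 * Λ + l / 2) / l := by positivity
  have hk1 : 12 * (L:ℝ) ^ 2 ≤ k := by linarith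
  have hk2 : 8 * (2 * Λ + l / 2) ≤ k * l := by
    have : 8 * (2 * Λ + l / 2) / l ≤ k := by nlinarith
    rwa [div_le_iff₀ hl0] at this
  have hk0 : (0:ℝ) < k := by nlinarith
  obtain ⟨d, hd⟩ : ∃ d, d = k / L := ⟨_, rfl⟩
  have hdk : d ≤ k := by rw [hd]; exact Nat.div_le_self _ _
  obtain ⟨j, hj⟩ : ∃ j, j = (k - d) / 2 := ⟨_, rfl⟩
  obtain ⟨D, hD⟩ : ∃ D, D = k - 2 * j := ⟨_, rfl⟩
  have hjD : 2 * j + D = k := by omega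
  have hD1 : d ≤ D := by omega
  have hD2 : D ≤ d + 1 := by omega
  have hjD' : 2 * (j:ℝ) + D = k := by exact_mod_cast hjD
  have hD1' : (d:ℝ) ≤ D := by exact_mod_cast hD1
  have hD2' : (D:ℝ) ≤ d + 1 := by exact_mod_cast hD2
  have hd1 : (d:ℝ) ≤ k / L := by rw [hd]; exact Nat.cast_div_le
  have hd2 : (k:ℝ) / L ≤ d + 1 := by
    rw [div_le_iff₀ hL0]
    have := Nat.lt_mul_div_succ k hLn
    rw [← hd] at this
    have : (k:ℝ) < L * (d + 1) := by exact_mod_cast this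
    linarith
  obtain ⟨a, t, ht, ha, hat⟩ := hext D
  obtain ⟨B, hB1, hB2⟩ := wh_key p hp1 hp2 ρ h C hρ0 hh hC hg k j D hjD a t ht ha hat
  have hlog2 : 0 < Real.log 2 := Real.log_pos (by norm_num)
  have hlog2' : Real.log 2 ≤ 1 := by linarith [Real.log_two_lt_d9]
  have e2 : (2:ℝ) ^ k = Real.exp (k * Real.log 2) := by
    rw [Real.exp_nat_mul, Real.exp_log (by norm_num)]
  refine ⟨B, ?_, fun x => ?_⟩
  · have hcount := wh_count k (1 / L) (by positivity) j D hjD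
    have h3 : (3:ℝ) ≤ Real.exp 2 := by linarith [Real.add_one_le_exp (2:ℝ)]
    calc (B.rank : ℝ) ≤ 3 * (((Finset.univ : Finset (Finset (Fin k))).filter (fun S => S.card < j)).card : ℝ) := by exact_mod_cast hB1
      _ ≤ Real.exp 2 * (Real.exp (-(1 / L * D)) * (2 ^ k * Real.exp (k * ((1 / L) ^ 2 / 2)))) := by
          exact mul_le_mul h3 hcount (Nat.cast_nonneg _) (Real.exp_pos _).le
      _ = Real.exp (2 + (-(1 / L * D) + (k * Real.log 2 + k * ((1 / L) ^ 2 / 2)))) := by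
          rw [e2, Real.exp_add, Real.exp_add, Real.exp_add]
      _ ≤ Real.exp (k * Real.log 2 * (1 - δ)) := by
          apply Real.exp_le_exp.2
          have h1 : (1:ℝ) / L * D ≥ 1 / L * (k / L - 1) := by gcongr; linarith
          have h2 : (1:ℝ) / L ≤ 1 := by rw [div_le_one hL0]; linarith
          have h4 : (1:ℝ) / L * (k / L - 1) = k / L ^ 2 - 1 / L := by field_simp
          have h5 : k * (((1:ℝ) / L) ^ 2 / 2) = (k / L ^ 2) / 2 := by field_simp
          have h6 : 12 ≤ k / (L:ℝ) ^ 2 := by rw [le_div_iff₀ (by positivity)]; exact hk1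
          have h7 : k * Real.log 2 * δ ≤ (k / (L:ℝ) ^ 2) / 4 := by
            calc k * Real.log 2 * δ ≤ k * 1 * (1 / (4 * (L:ℝ) ^ 2)) := by gcongr
              _ = _ := by field_simp
          rw [h5]
          rw [h4] at h1
          linarith
      _ = _ := by rw [e2, ← Real.exp_mul]
  · have hp0 : 0 < p := by linarith
    have hm := hB2 x
    have hn : 0 ≤ ((2 : ℝ) ^ k)⁻¹ * ∑ y, |B x y - walshHadamard k x y| ^ p := by positivity
    have hm2 : ((2 : ℝ) ^ k)⁻¹ * ∑ y, |B x y - walshHadamard k x y| ^ p ≤ Real.exp (k * Real.log 2 * (-δ) * p) := by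
      refine hm.trans ?_
      rw [eK, eρ, ← Real.exp_nat_mul, ← Real.exp_nat_mul, ← Real.exp_add]
      apply Real.exp_le_exp.2
      push_cast
      have h1 : k * Real.log 2 * δ * p ≤ k * 1 * (l / 16) * 2 := by gcongr
      have h2 : ((D:ℝ) + 1) * Λ ≤ (k / L + 2) * Λ := mul_le_mul_of_nonneg_right (by linarith) hΛ0.le
      have h3 : k / L * Λ ≤ k * l / 8 := by
        rw [div_mul_eq_mul_div, div_le_iff₀ hL0]
        nlinarith
      have h4 : (k:ℝ) / L ≤ k / 4 := by gcongr
      have h5 : (3 * k / 8 - 1 / 2) * l ≤ j * l := by gcongr; linarith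
      linarith
    calc _ ≤ (Real.exp (k * Real.log 2 * (-δ) * p)) ^ (1 / p) := by gcongr
      _ = Real.exp (k * Real.log 2 * (-δ)) := by
          rw [← Real.exp_mul]; congr 1; field_simp
      _ = _ := by rw [e2, ← Real.exp_mul]
end

section
/- Let A ∈ ℝ^{n×n} be a Hadamard matrix, i.e. all entries of A equal ±1 and A Aᵀ = n·I. Then for every matrix B ∈ ℝ^{n×n} with rank(B) ≤ m ≤ n one has max_{i,j} |A_{i,j} − B_{i,j}| ≥ (1 − m/n)^{1/2}. In particular, if rank(B) ≤ εn with ε ∈ (0,1), then max_{i,j} |A_{i,j} − B_{i,j}| ≥ (1 − ε)^{1/2}. -/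
theorem frob_aux (n : ℕ) (hn : 0 < n) (A : Matrix (Fin n) (Fin n) ℝ)
    (hAA : A * A.transpose = (n : ℝ) • (1 : Matrix (Fin n) (Fin n) ℝ))
    (B : Matrix (Fin n) (Fin n) ℝ) :
    (n : ℝ) * (n - B.rank) ≤ ∑ i, ∑ j, (A i j - B i j) ^ 2 := by
  have hn0 : (n : ℝ) ≠ 0 := by positivity
  have hAtA : A.transpose * A = (n : ℝ) • (1 : Matrix (Fin n) (Fin n) ℝ) := by
    have h1 : A * ((n : ℝ)⁻¹ • A.transpose) = 1 := by
      rw [Matrix.mul_smul, hAA, smul_smul, inv_mul_cancel₀ hn0, one_smul]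
    have h2 := mul_eq_one_comm.mp h1
    rw [Matrix.smul_mul] at h2
    rw [← h2, smul_smul, mul_inv_cancel₀ hn0, one_smul]
  let e := WithLp.linearEquiv 2 ℝ (Fin n → ℝ)
  let f : EuclideanSpace ℝ (Fin n) →ₗ[ℝ] (Fin n → ℝ) := B.mulVecLin ∘ₗ e.toLinearMap
  let K := LinearMap.ker f
  have hK : B.rank + Module.finrank ℝ K = n := by
    have h := LinearMap.finrank_range_add_finrank_ker f
    have hr : LinearMap.range f = LinearMap.range B.mulVecLin := LinearEquiv.range_comp _ _
    rw [hr, finrank_euclideanSpace_fin] at h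
    exact h
  let b := stdOrthonormalBasis ℝ K
  let u : Fin (Module.finrank ℝ K) → EuclideanSpace ℝ (Fin n) := fun k => (b k : EuclideanSpace ℝ (Fin n))
  have hu : Orthonormal ℝ u := b.orthonormal.comp_linearIsometry K.subtypeₗᵢ
  have hBu : ∀ k, B.mulVec (u k).ofLp = 0 := fun k => (b k).2
  have hrow : ∀ i, ∑ k, (∑ j, (A i j - B i j) * u k j) ^ 2 ≤ ∑ j, (A i j - B i j) ^ 2 := by
    intro i
    have h := hu.sum_inner_products_le (s := Finset.univ) (WithLp.toLp 2 (fun j => A i j - B i j))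
    rw [EuclideanSpace.norm_sq_eq] at h
    simpa [PiLp.inner_apply] using h
  have hk : ∀ k, ∑ i, (∑ j, (A i j - B i j) * u k j) ^ 2 = n := by
    intro k
    have h1 : ∀ i, ∑ j, (A i j - B i j) * u k j = A.mulVec (u k).ofLp i := by
      intro i
      have := congrFun (hBu k) i
      simp only [Matrix.mulVec, dotProduct, Pi.zero_apply] at this ⊢
      simp only [sub_mul, Finset.sum_sub_distrib, this, sub_zero]
    simp only [h1]
    have h2 : ∑ i, (A.mulVec (u k).ofLp i) ^ 2 = A.mulVec (u k).ofLp ⬝ᵥ A.mulVec (u k).ofLp := by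
      simp [dotProduct, sq]
    have h3 : (u k).ofLp ⬝ᵥ (u k).ofLp = 1 := by
      have h := EuclideanSpace.norm_sq_eq (u k)
      rw [hu.1 k] at h
      simp only [Real.norm_eq_abs, sq_abs] at h
      simp only [dotProduct, ← sq]
      linarith
    rw [h2, Matrix.dotProduct_mulVec, Matrix.vecMul_mulVec, ← Matrix.dotProduct_mulVec, hAtA, Matrix.smul_mulVec, Matrix.one_mulVec,
      dotProduct_smul, h3]
    simp
  have hfin : (n : ℝ) - B.rank = Module.finrank ℝ K := by
    rw [sub_eq_iff_eq_add']
    exact_mod_cast hK.symm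
  calc (n : ℝ) * (n - B.rank) = ∑ k, ∑ i, (∑ j, (A i j - B i j) * u k j) ^ 2 := by
        simp only [hk]
        rw [hfin]; simp [mul_comm]
    _ = ∑ i, ∑ k, (∑ j, (A i j - B i j) * u k j) ^ 2 := Finset.sum_comm
    _ ≤ _ := Finset.sum_le_sum fun i _ => hrow i

theorem exists_aux (n : ℕ) (hn : 0 < n) (A : Matrix (Fin n) (Fin n) ℝ)
    (hAA : A * A.transpose = (n : ℝ) • (1 : Matrix (Fin n) (Fin n) ℝ))
    (ε : ℝ) (B : Matrix (Fin n) (Fin n) ℝ) (hB : (B.rank : ℝ) ≤ ε * n) :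
    ∃ i j, Real.sqrt (1 - ε) ≤ |A i j - B i j| := by
  have hn' : (0 : ℝ) < n := by positivity
  haveI : Nonempty (Fin n) := ⟨⟨0, hn⟩⟩
  by_contra! hc
  have hlt : ∀ i j, (A i j - B i j) ^ 2 < 1 - ε := by
    intro i j
    have h0 : 0 < Real.sqrt (1 - ε) := (abs_nonneg _).trans_lt (hc i j)
    have h1 := Real.sqrt_pos.1 h0
    rw [← sq_abs, ← Real.sq_sqrt h1.le]
    exact pow_lt_pow_left₀ (hc i j) (abs_nonneg _) two_ne_zero
  have h := frob_aux n hn A hAA B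
  have h2 : ∑ i, ∑ j, (A i j - B i j) ^ 2 < ∑ _i : Fin n, ∑ _j : Fin n, (1 - ε) :=
    Finset.sum_lt_sum_of_nonempty Finset.univ_nonempty fun i _ =>
      Finset.sum_lt_sum_of_nonempty Finset.univ_nonempty fun j _ => hlt i j
  simp only [Finset.sum_const, Finset.card_univ, Fintype.card_fin, nsmul_eq_mul] at h2
  have h3 := lt_of_mul_lt_mul_left (h.trans_lt h2) hn'.le
  linarith

/-- A Hadamard matrix (±1 entries, `A Aᵀ = n·I`) cannot be approximated entrywise by
low-rank matrices: if `rank B ≤ m ≤ n` then `max |A_{ij} - B_{ij}| ≥ √(1 - m/n)`;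
in particular, if `rank B ≤ εn` with `ε ∈ (0,1)`, then `max |A_{ij} - B_{ij}| ≥ √(1-ε)`. -/
theorem hadamard_linfty_rigid (n : ℕ) (hn : 0 < n) (A : Matrix (Fin n) (Fin n) ℝ)
    (hA : ∀ i j, A i j = 1 ∨ A i j = -1)
    (hAA : A * A.transpose = (n : ℝ) • (1 : Matrix (Fin n) (Fin n) ℝ)) :
    (∀ m : ℕ, m ≤ n → ∀ B : Matrix (Fin n) (Fin n) ℝ, B.rank ≤ m →
      ∃ i j, Real.sqrt (1 - (m : ℝ) / n) ≤ |A i j - B i j|) ∧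
    (∀ ε : ℝ, 0 < ε → ε < 1 → ∀ B : Matrix (Fin n) (Fin n) ℝ, (B.rank : ℝ) ≤ ε * n →
      ∃ i j, Real.sqrt (1 - ε) ≤ |A i j - B i j|) := by
  refine ⟨fun m _ B hB => exists_aux n hn A hAA _ B ?_, fun ε _ _ B hB => exists_aux n hn A hAA ε B hB⟩
  have hn0 : (n : ℝ) ≠ 0 := by positivity
  rw [div_mul_cancel₀ _ hn0]
  exact_mod_cast hB
end

section
/- There is an absolute constant c > 0 with the following property. Let ε ∈ (0,1), n ∈ ℕ, and let R be a linear subspace of ℝ^n with dim R ≤ (1−ε)n. Then 2^{−n} ∑_{u ∈ {−1,1}^n} dist_{ℓ_1^n}(u, R) ≥ c ε² n, where dist_{ℓ_1^n}(u, R) = inf_{v ∈ R} ∑_{i=1}^n |u_i − v_i|. -/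
lemma aux_support {n : ℕ} (R : Submodule ℝ (Fin n → ℝ)) (x v : Fin n → ℝ) (hv : v ∈ R) :
    ∃ z : Fin n → ℝ, x - z ∈ R ∧ ∑ i, |z i| ≤ ∑ i, |x i - v i| ∧
      ∀ r ∈ R, (∀ i, z i = 0 → r i = 0) → r = 0 := by
  classical
  let P : ℕ → Prop := fun m => ∃ z : Fin n → ℝ, x - z ∈ R ∧ ∑ i, |z i| ≤ ∑ i, |x i - v i| ∧
    (Finset.univ.filter (fun i => z i ≠ 0)).card = m
  have hP : ∃ m, P m := ⟨_, x - v, by simpa using hv, by simp, rfl⟩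
  obtain ⟨z, hz, hle, hc⟩ := Nat.find_spec hP
  refine ⟨z, hz, hle, ?_⟩
  have key : ∀ r ∈ R, (∀ i, z i = 0 → r i = 0) → ∑ i, SignType.sign (z i) * r i ≤ 0 → r = 0 := by
    intro r hr hs hneg
    by_contra hne
    have hex : (Finset.univ.filter (fun i => z i * r i < 0)).Nonempty := by
      by_contra hno
      rw [Finset.not_nonempty_iff_eq_empty, Finset.filter_eq_empty_iff] at hno
      have h1 : ∀ i, (SignType.sign (z i) : ℝ) * r i = |r i| := by
        intro i
        have h0 := hno (Finset.mem_univ i)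
        rcases lt_trichotomy (z i) 0 with h | h | h
        · rw [sign_neg h, abs_of_nonpos (by by_contra h'; apply h0; nlinarith)]; simp
        · simp [h, hs i h]
        · rw [sign_pos h, abs_of_nonneg (by by_contra h'; apply h0; nlinarith)]; simp
      simp only [h1] at hneg
      apply hne
      funext i
      have := (Finset.sum_eq_zero_iff_of_nonneg (fun i _ => abs_nonneg (r i))).1
        (le_antisymm hneg (Finset.sum_nonneg fun i _ => abs_nonneg (r i))) i (Finset.mem_univ i)
      simpa using this
    obtain ⟨i0, hi0, hmin⟩ := Finset.exists_min_image _ (fun i => - z i / r i) hex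
    simp only [Finset.mem_filter, Finset.mem_univ, true_and] at hi0 hmin
    set t := - z i0 / r i0 with ht
    have hr0 : r i0 ≠ 0 := by intro h; simp [h] at hi0
    have hz0 : z i0 ≠ 0 := by intro h; simp [h] at hi0
    have htpos : 0 ≤ t := by
      have : t = (-(z i0 * r i0)) / (r i0)^2 := by rw [ht]; field_simp
      rw [this]; apply div_nonneg <;> nlinarith [sq_nonneg (r i0)]
    have habs : ∀ i, |z i + t * r i| = |z i| + t * (SignType.sign (z i) * r i) := by
      intro i
      rcases lt_trichotomy (z i) 0 with h | h | h
      · have : z i + t * r i ≤ 0 := by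
          by_cases hr' : 0 < r i
          · have := hmin i (by nlinarith)
            rw [le_div_iff₀ hr'] at this; linarith
          · nlinarith
        rw [sign_neg h, abs_of_nonpos this, abs_of_neg h]; simp; ring
      · simp [h, hs i h]
      · have : 0 ≤ z i + t * r i := by
          by_cases hr' : r i < 0
          · have := hmin i (by nlinarith)
            rw [le_div_iff_of_neg hr'] at this; linarith
          · nlinarith
        rw [sign_pos h, abs_of_nonneg this, abs_of_pos h]; simp
    refine Nat.find_min hP (m := (Finset.univ.filter (fun i => (z + t • r) i ≠ 0)).card) ?_
      ⟨z + t • r, ?_, ?_, rfl⟩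
    · rw [← hc]
      apply Finset.card_lt_card
      rw [Finset.ssubset_iff_of_subset]
      · refine ⟨i0, by simpa using hz0, ?_⟩
        simp only [Finset.mem_filter, Finset.mem_univ, true_and, not_not, Pi.add_apply,
          Pi.smul_apply, smul_eq_mul, ht]
        field_simp; ring
      · intro i
        simp only [Finset.mem_filter, Finset.mem_univ, true_and, Pi.add_apply,
          Pi.smul_apply, smul_eq_mul]
        intro h h'; apply h; simp [h', hs i h']
    · have : x - (z + t • r) = (x - z) - t • r := by abel
      rw [this]; exact R.sub_mem hz (R.smul_mem _ hr)
    · simp only [Pi.add_apply, Pi.smul_apply, smul_eq_mul, habs]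
      rw [Finset.sum_add_distrib, ← Finset.mul_sum]
      nlinarith
  intro r hr hs
  rcases le_total (∑ i, (SignType.sign (z i) : ℝ) * r i) 0 with h | h
  · exact key r hr hs h
  · have := key (-r) (R.neg_mem hr) (fun i hi => by simp [hs i hi]) (by simpa using h)
    simpa using this

lemma aux_extend {n : ℕ} (R : Submodule ℝ (Fin n → ℝ)) (z : Fin n → ℝ)
    (hz : ∀ r ∈ R, (∀ i, z i = 0 → r i = 0) → r = 0) :
    ∃ S : Finset (Fin n), S.card = n - Module.finrank ℝ R ∧ (∀ i ∉ S, z i = 0) ∧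
      ∀ r ∈ R, (∀ i ∉ S, r i = 0) → r = 0 := by
  classical
  let e : Fin n → ((Fin n → ℝ) ⧸ R) := fun i => R.mkQ (Pi.single i 1)
  have he : ∀ (T : Finset (Fin n)) (g : Fin n → ℝ),
      ∑ i ∈ T, g i • e i = R.mkQ (fun i => if i ∈ T then g i else 0) := by
    intro T g
    simp only [e, ← map_smul, ← map_sum]
    congr 1
    funext j
    simp [Finset.sum_apply, Pi.single_apply]
  let T : Finset (Fin n) := Finset.univ.filter (fun i => z i ≠ 0)
  have hT : LinearIndepOn ℝ e (T : Set (Fin n)) := by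
    rw [linearIndepOn_finset_iff]
    intro g hg i hi
    rw [he, Submodule.mkQ_apply, Submodule.Quotient.mk_eq_zero] at hg
    have := hz _ hg (fun i hi => by simp [T, hi])
    have := congrFun this i
    simpa [hi] using this
  obtain ⟨b, -, hTb, hsp, hli⟩ := exists_linearIndepOn_extension hT (Set.subset_univ _)
  have htop : ⊤ ≤ Submodule.span ℝ (Set.range (fun i : b => e i)) := by
    have h1 : Set.range (fun i : b => e i) = e '' b := by ext; simp
    rw [h1]
    intro q _
    obtain ⟨y, rfl⟩ := R.mkQ_surjective q
    have : R.mkQ y = ∑ i ∈ Finset.univ, y i • e i := by rw [he]; simp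
    rw [this]
    exact Submodule.sum_mem _ fun i _ => Submodule.smul_mem _ _ (hsp ⟨i, trivial, rfl⟩)
  let B := Module.Basis.mk hli htop
  have hcard := Module.finrank_eq_card_basis B
  have hq := Submodule.finrank_quotient_add_finrank R
  simp only [Module.finrank_fin_fun] at hq
  refine ⟨b.toFinset, ?_, ?_, ?_⟩
  · rw [Set.toFinset_card]
    omega
  · intro i hi
    by_contra h
    exact hi (by simpa using hTb (by simpa [T] using h))
  · intro r hr hs
    have h2 : LinearIndepOn ℝ e (b.toFinset : Set (Fin n)) := by simpa using hli
    rw [linearIndepOn_finset_iff] at h2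
    funext i
    by_cases hi : i ∈ b.toFinset
    · refine h2 r ?_ i hi
      rw [he, Submodule.mkQ_apply, Submodule.Quotient.mk_eq_zero]
      convert hr using 1
      funext i
      split_ifs with h
      · rfl
      · exact (hs i h).symm
    · exact hs i hi

open Classical in
noncomputable def wt {n : ℕ} (R : Submodule ℝ (Fin n → ℝ)) (N : ℝ) (S : Finset (Fin n))
    (x : Fin n → ℝ) : ℝ :=
  if h : ∃ z : Fin n → ℝ, (∀ i ∉ S, z i = 0) ∧ x - z ∈ R then
    Real.exp (-(N * ∑ i, |h.choose i|)) else 0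

lemma wt_nonneg {n : ℕ} (R : Submodule ℝ (Fin n → ℝ)) (N : ℝ) (S : Finset (Fin n))
    (x : Fin n → ℝ) : 0 ≤ wt R N S x := by
  unfold wt; split_ifs <;> positivity

lemma wt_eq {n : ℕ} (R : Submodule ℝ (Fin n → ℝ)) (N : ℝ) (S : Finset (Fin n))
    (hS : ∀ r ∈ R, (∀ i ∉ S, r i = 0) → r = 0)
    (x z : Fin n → ℝ) (hz : ∀ i ∉ S, z i = 0) (hx : x - z ∈ R) :
    wt R N S x = Real.exp (-(N * ∑ i, |z i|)) := by
  have h : ∃ z : Fin n → ℝ, (∀ i ∉ S, z i = 0) ∧ x - z ∈ R := ⟨z, hz, hx⟩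
  unfold wt
  rw [dif_pos h]
  have : h.choose - z = 0 := by
    apply hS
    · have := R.sub_mem hx h.choose_spec.2
      simpa using this
    · intro i hi
      simp [hz i hi, h.choose_spec.1 i hi]
  rw [sub_eq_zero.1 this]

lemma wt_sum {n : ℕ} (R : Submodule ℝ (Fin n → ℝ)) (N : ℝ) (S : Finset (Fin n))
    (hS : ∀ r ∈ R, (∀ i ∉ S, r i = 0) → r = 0) {G : Type} [Fintype G] (val : G → ℝ) (B : ℝ)
    (hB : ∀ β, ∑ g, Real.exp (-(N * |val g - β|)) ≤ B) :
    ∑ p : Fin n → G, wt R N S (fun i => val (p i)) ≤ (Fintype.card G : ℝ) ^ (n - S.card) * B ^ S.card := by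
  classical
  have hB0 : 0 ≤ B := le_trans (Finset.sum_nonneg fun _ _ => by positivity) (hB 0)
  let E := Equiv.piEquivPiSubtypeProd (fun i : Fin n => i ∈ S) (fun _ => G)
  rw [← E.symm.sum_comp, Fintype.sum_prod_type, Finset.sum_comm]
  have : ∀ y : ({i // i ∉ S} → G), ∑ q : ({i // i ∈ S} → G),
      wt R N S (fun i => val (E.symm (q, y) i)) ≤ B ^ S.card := by
    intro y
    by_cases h : ∃ q0 : ({i // i ∈ S} → G), ∃ z : Fin n → ℝ, (∀ i ∉ S, z i = 0) ∧
      (fun i => val (E.symm (q0, y) i)) - z ∈ R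
    · obtain ⟨q0, z0, h1, h2⟩ := h
      have h3 : ∀ q, wt R N S (fun i => val (E.symm (q, y) i)) =
          ∏ i : {i // i ∈ S}, Real.exp (-(N * |val (q i) - (val (q0 i) - z0 i)|)) := by
        intro q
        rw [wt_eq R N S hS _ (fun i => val (E.symm (q, y) i) - (val (E.symm (q0, y) i) - z0 i))]
        · rw [← Real.exp_sum, Finset.sum_neg_distrib, ← Finset.mul_sum]
          congr 3
          rw [← Finset.sum_subset (Finset.subset_univ S), ← Finset.sum_coe_sort S]
          · apply Finset.sum_congr rfl
            rintro ⟨i, hi⟩ _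
            simp [E, Equiv.piEquivPiSubtypeProd, hi]
          · intro i _ hi
            simp [E, Equiv.piEquivPiSubtypeProd, hi, h1 i hi]
        · intro i hi
          simp [E, Equiv.piEquivPiSubtypeProd, hi, h1 i hi]
        · convert h2 using 1
          funext i
          simp
      simp only [h3]
      rw [← Fintype.prod_sum (fun (i : {i // i ∈ S}) g => Real.exp (-(N * |val g - (val (q0 i) - z0 i)|)))]
      calc _ ≤ ∏ i : {i // i ∈ S}, B := Finset.prod_le_prod
            (fun _ _ => Finset.sum_nonneg fun _ _ => by positivity) (fun _ _ => hB _)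
        _ = _ := by simp
    · rw [Finset.sum_eq_zero]
      · positivity
      · intro q _
        unfold wt
        rw [dif_neg]
        intro h'
        exact h ⟨q, h'⟩
  refine (Finset.sum_le_sum fun y _ => this y).trans ?_
  simp [Fintype.card_subtype_compl]

lemma grid_aux (N : ℕ) (β : ℝ) : ∑ j : Fin N, Real.exp (-|((j:ℕ):ℝ) - β|) ≤ 5 := by
  rw [Fin.sum_univ_eq_sum_range (fun j => Real.exp (-|(j:ℝ) - β|)) N]
  let φ : ℝ → ℝ := fun x => if β ≤ x then 5 - 2 * Real.exp (β - x) else 2 * Real.exp (x - β)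
  have hφ0 : ∀ x, 0 ≤ φ x := by
    intro x
    simp only [φ]
    split_ifs with h
    · have : Real.exp (β - x) ≤ 1 := by rw [Real.exp_le_one_iff]; linarith
      linarith
    · positivity
  have hφ5 : ∀ x, φ x ≤ 5 := by
    intro x
    simp only [φ]
    split_ifs with h
    · have := Real.exp_pos (β - x); linarith
    · have : Real.exp (x - β) ≤ 1 := by rw [Real.exp_le_one_iff]; linarith
      linarith
  have he : 2 ≤ Real.exp 1 := by linarith [Real.add_one_le_exp (1:ℝ)]
  have hstep : ∀ j : ℕ, Real.exp (-|(j:ℝ) - β|) ≤ φ ((j+1 : ℕ):ℝ) - φ (j:ℝ) := by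
    intro j
    simp only [φ]
    push_cast
    by_cases h1 : β ≤ j
    · rw [if_pos h1, if_pos (by linarith), abs_of_nonneg (by linarith)]
      have e1 : Real.exp (β - j) = Real.exp 1 * Real.exp (β - (j+1)) := by
        rw [← Real.exp_add]; ring_nf
      have e2 : -((j:ℝ) - β) = β - j := by ring
      rw [e2]
      have := Real.exp_pos (β - (j+1))
      nlinarith
    · rw [if_neg h1, abs_of_neg (by linarith)]
      push Not at h1
      rw [neg_neg]
      split_ifs with h2
      · have a1 : Real.exp (j - β) ≤ 1 := by rw [Real.exp_le_one_iff]; linarith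
        have a2 : Real.exp (β - (j+1)) ≤ 1 := by rw [Real.exp_le_one_iff]; linarith
        linarith
      · have e1 : Real.exp (j + 1 - β) = Real.exp 1 * Real.exp (j - β) := by
          rw [← Real.exp_add]; ring_nf
        have := Real.exp_pos (j - β)
        nlinarith
  calc _ ≤ ∑ j ∈ Finset.range N, (φ ((j+1 : ℕ):ℝ) - φ (j:ℝ)) := Finset.sum_le_sum fun j _ => hstep j
    _ = φ N - φ (0:ℕ) := Finset.sum_range_sub (fun j : ℕ => φ (j:ℝ)) N
    _ ≤ 5 := by linarith [hφ0 ((0:ℕ):ℝ), hφ5 N]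

noncomputable def sg (b : Bool) : ℝ := if b then 1 else -1

noncomputable def gval (N : ℕ) (g : Bool × Fin N) : ℝ := (((g.2:ℕ):ℝ) + 1) / N * sg g.1

lemma grid_bound (N : ℕ) (hN : 0 < N) (β : ℝ) :
    ∑ g, Real.exp (-((N:ℝ) * |gval N g - β|)) ≤ 10 := by
  have hN' : (0:ℝ) < N := by exact_mod_cast hN
  rw [Fintype.sum_prod_type, Fintype.sum_bool]
  have h1 : ∀ j : Fin N, (N:ℝ) * |gval N (true, j) - β| = |((j:ℕ):ℝ) - (N * β - 1)| := by
    intro j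
    rw [← abs_of_pos hN', ← abs_mul, abs_of_pos hN']
    congr 1
    simp [gval, sg]; field_simp; ring
  have h2 : ∀ j : Fin N, (N:ℝ) * |gval N (false, j) - β| = |((j:ℕ):ℝ) - (-(N * β) - 1)| := by
    intro j
    rw [← abs_of_pos hN', ← abs_mul, abs_of_pos hN', ← abs_neg]
    congr 1
    simp [gval, sg]; field_simp; ring
  simp only [h1, h2]
  linarith [grid_aux N (N * β - 1), grid_aux N (-(N * β) - 1)]

noncomputable def dst {n : ℕ} (R : Submodule ℝ (Fin n → ℝ)) (x : Fin n → ℝ) : ℝ :=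
  ⨅ v : R, ∑ i, |x i - (v : Fin n → ℝ) i|

lemma dst_bdd {n : ℕ} (R : Submodule ℝ (Fin n → ℝ)) (x : Fin n → ℝ) :
    BddBelow (Set.range fun v : R => ∑ i, |x i - (v : Fin n → ℝ) i|) :=
  ⟨0, by rintro _ ⟨v, rfl⟩; positivity⟩

lemma dst_nonneg {n : ℕ} (R : Submodule ℝ (Fin n → ℝ)) (x : Fin n → ℝ) : 0 ≤ dst R x :=
  Real.iInf_nonneg fun v => by positivity

lemma dst_convex {n : ℕ} (R : Submodule ℝ (Fin n → ℝ)) : ConvexOn ℝ Set.univ (dst R) := by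
  refine ⟨convex_univ, ?_⟩
  intro x _ y _ a b ha hb hab
  apply le_of_forall_pos_le_add
  intro δ hδ
  obtain ⟨v, hv⟩ := exists_lt_of_ciInf_lt (show dst R x < dst R x + δ by linarith)
  obtain ⟨w, hw⟩ := exists_lt_of_ciInf_lt (show dst R y < dst R y + δ by linarith)
  refine (ciInf_le (dst_bdd R _) (a • v + b • w)).trans ?_
  calc _ ≤ ∑ i, (a * |x i - (v : Fin n → ℝ) i| + b * |y i - (w : Fin n → ℝ) i|) := by
        apply Finset.sum_le_sum
        intro i _
        rw [← abs_of_nonneg ha, ← abs_of_nonneg hb, ← abs_mul, ← abs_mul,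
          abs_of_nonneg ha, abs_of_nonneg hb]
        refine le_trans (le_of_eq ?_) (abs_add_le _ _)
        congr 1
        simp; ring
    _ = a * ∑ i, |x i - (v : Fin n → ℝ) i| + b * ∑ i, |y i - (w : Fin n → ℝ) i| := by
        rw [Finset.sum_add_distrib, Finset.mul_sum, Finset.mul_sum]
    _ ≤ a * (dst R x + δ) + b * (dst R y + δ) := by gcongr
    _ = _ := by simp only [smul_eq_mul]; linear_combination δ * hab

lemma contraction {n : ℕ} (R : Submodule ℝ (Fin n → ℝ)) (a : Fin n → ℝ)
    (ha : ∀ i, a i ∈ Set.Icc (-1:ℝ) 1) :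
    ∑ u : Fin n → Bool, dst R (fun i => a i * sg (u i)) ≤
      ∑ u : Fin n → Bool, dst R (fun i => sg (u i)) := by
  let g : (Fin n → ℝ) → ℝ := fun a => ∑ u : Fin n → Bool, dst R (fun i => a i * sg (u i))
  have hg : ConvexOn ℝ Set.univ g := by
    refine ⟨convex_univ, ?_⟩
    intro x _ y _ s t hs ht hst
    simp only [g, Finset.smul_sum]
    rw [← Finset.sum_add_distrib]
    apply Finset.sum_le_sum
    intro u _
    have := (dst_convex R).2 (Set.mem_univ (fun i => x i * sg (u i)))
      (Set.mem_univ (fun i => y i * sg (u i))) hs ht hst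
    convert this using 2
    funext i
    simp; ring
  have hmem : a ∈ convexHull ℝ (Set.univ.pi fun _ : Fin n => ({-1, 1} : Set ℝ)) := by
    rw [convexHull_pi]
    intro i _
    rw [convexHull_pair, segment_eq_Icc (by norm_num)]
    exact ha i
  obtain ⟨y, hy, hle⟩ := hg.exists_ge_of_mem_convexHull (Set.subset_univ _) hmem
  refine hle.trans (le_of_eq ?_)
  classical
  let E : (Fin n → Bool) ≃ (Fin n → Bool) :=
    Equiv.piCongrRight fun i => if y i = 1 then Equiv.refl _ else Equiv.boolNot
  rw [← E.sum_comp]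
  apply Finset.sum_congr rfl
  intro u _
  congr 1
  funext i
  have := hy i trivial
  simp only [Set.mem_insert_iff, Set.mem_singleton_iff] at this
  rcases this with h | h
  · have : ¬ ((-1:ℝ) = 1) := by norm_num
    cases hu : u i <;> simp [E, h, this, sg, hu]
  · simp [E, h]

lemma exp_dst_le {n : ℕ} (R : Submodule ℝ (Fin n → ℝ)) (N : ℝ) (hN : 0 < N) (x : Fin n → ℝ)
    (F : Finset (Finset (Fin n)))
    (hF : ∀ S, S ∈ F ↔ S.card = n - Module.finrank ℝ R ∧ ∀ r ∈ R, (∀ i ∉ S, r i = 0) → r = 0) :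
    Real.exp (-(N * dst R x)) ≤ ∑ S ∈ F, wt R N S x := by
  have key : ∀ v : R, Real.exp (-(N * ∑ i, |x i - (v : Fin n → ℝ) i|)) ≤ ∑ S ∈ F, wt R N S x := by
    intro v
    obtain ⟨z, h1, h2, h3⟩ := aux_support R x v v.2
    obtain ⟨S, g1, g2, g3⟩ := aux_extend R z h3
    refine le_trans ?_ (Finset.single_le_sum (fun S _ => wt_nonneg R N S x) ((hF S).2 ⟨g1, g3⟩))
    rw [wt_eq R N S g3 x z g2 h1]
    gcongr
  set W := ∑ S ∈ F, wt R N S x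
  have hW : 0 < W := lt_of_lt_of_le (Real.exp_pos _) (key 0)
  rw [← Real.le_log_iff_exp_le hW]
  have : - Real.log W / N ≤ dst R x := by
    apply le_ciInf
    intro v
    have := key v
    rw [← Real.le_log_iff_exp_le hW] at this
    rw [div_le_iff₀ hN]; linarith
  rw [div_le_iff₀ hN] at this
  linarith

lemma main_exp {n : ℕ} (R : Submodule ℝ (Fin n → ℝ)) (N : ℕ) (hN : 0 < N) (k : ℕ)
    (hk : k = n - Module.finrank ℝ R) :
    Real.exp (-(N * (((2 : ℝ) ^ n)⁻¹ * ∑ u : Fin n → Bool, dst R (fun i => sg (u i))))) ≤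
      (n.choose k : ℝ) * (5 / N) ^ k := by
  classical
  have hN' : (0:ℝ) < N := by exact_mod_cast hN
  have hkn : k ≤ n := by omega
  let F : Finset (Finset (Fin n)) := Finset.univ.filter fun S =>
    S.card = n - Module.finrank ℝ R ∧ ∀ r ∈ R, (∀ i ∉ S, r i = 0) → r = 0
  have hF : ∀ S, S ∈ F ↔ S.card = n - Module.finrank ℝ R ∧
      ∀ r ∈ R, (∀ i ∉ S, r i = 0) → r = 0 := by intro S; simp [F]
  have hFc : F.card ≤ n.choose k := by
    have : F ⊆ Finset.powersetCard k Finset.univ := by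
      intro S hS
      rw [Finset.mem_powersetCard]
      exact ⟨Finset.subset_univ _, by rw [((hF S).1 hS).1, hk]⟩
    simpa using Finset.card_le_card this
  have hcard : (Fintype.card (Bool × Fin N) : ℝ) = 2 * N := by simp
  have h1 : ∑ p : Fin n → Bool × Fin N, Real.exp (-(N * dst R (fun i => gval N (p i)))) ≤
      (n.choose k : ℝ) * ((2 * N : ℝ) ^ (n - k) * 10 ^ k) := by
    calc _ ≤ ∑ p : Fin n → Bool × Fin N, ∑ S ∈ F, wt R N S (fun i => gval N (p i)) :=
          Finset.sum_le_sum fun p _ => exp_dst_le R N hN' _ F hF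
      _ = ∑ S ∈ F, ∑ p : Fin n → Bool × Fin N, wt R N S (fun i => gval N (p i)) :=
          Finset.sum_comm
      _ ≤ ∑ S ∈ F, ((2 * N : ℝ) ^ (n - k) * 10 ^ k) := by
          apply Finset.sum_le_sum
          intro S hS
          have := wt_sum R N S ((hF S).1 hS).2 (gval N) 10 (grid_bound N hN)
          rwa [hcard, ((hF S).1 hS).1, ← hk] at this
      _ ≤ _ := by
          rw [Finset.sum_const, nsmul_eq_mul]
          gcongr
  have h2 : ∑ p : Fin n → Bool × Fin N, dst R (fun i => gval N (p i)) ≤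
      (N:ℝ) ^ n * ∑ u : Fin n → Bool, dst R (fun i => sg (u i)) := by
    let E := Equiv.arrowProdEquivProdArrow (Fin n) (fun _ => Bool) (fun _ => Fin N)
    rw [← E.symm.sum_comp, Fintype.sum_prod_type, Finset.sum_comm]
    calc _ ≤ ∑ a : Fin n → Fin N, ∑ u : Fin n → Bool, dst R (fun i => sg (u i)) := by
          apply Finset.sum_le_sum
          intro a _
          refine contraction R (fun i => (((a i : ℕ):ℝ) + 1) / N) ?_
          intro i
          refine ⟨le_trans (by norm_num) (by positivity : (0:ℝ) ≤ (((a i : ℕ):ℝ) + 1) / N), ?_⟩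
          rw [div_le_one hN']
          exact_mod_cast (a i).2
      _ = _ := by simp
  have h3 := convexOn_exp.map_sum_le (t := (Finset.univ : Finset (Fin n → Bool × Fin N)))
    (w := fun _ => ((2 * N : ℝ) ^ n)⁻¹) (p := fun p => -(N * dst R (fun i => gval N (p i))))
    (fun _ _ => by positivity) (by
      rw [Finset.sum_const, nsmul_eq_mul, Finset.card_univ, Fintype.card_fun, Fintype.card_fin]
      push_cast
      rw [hcard]
      exact mul_inv_cancel₀ (by positivity)) (fun _ _ => Set.mem_univ _)
  simp only [smul_eq_mul] at h3
  rw [← Finset.mul_sum, ← Finset.mul_sum, Finset.sum_neg_distrib, ← Finset.mul_sum] at h3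
  calc _ ≤ _ := by
        rw [Real.exp_le_exp]
        show _ ≤ ((2 * N : ℝ) ^ n)⁻¹ * -(N * ∑ p : Fin n → Bool × Fin N, dst R (fun i => gval N (p i)))
        have : ((2 * N : ℝ) ^ n)⁻¹ * (N * ∑ p : Fin n → Bool × Fin N, dst R (fun i => gval N (p i)))
          ≤ ((2 * N : ℝ) ^ n)⁻¹ * (N * ((N:ℝ) ^ n * ∑ u : Fin n → Bool, dst R (fun i => sg (u i)))) := by
          gcongr
        have e : ((2 * N : ℝ) ^ n)⁻¹ * (N * ((N:ℝ) ^ n * ∑ u : Fin n → Bool, dst R (fun i => sg (u i))))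
          = N * (((2 : ℝ) ^ n)⁻¹ * ∑ u : Fin n → Bool, dst R (fun i => sg (u i))) := by
          rw [mul_pow]; field_simp
        linarith
    _ ≤ _ := h3
    _ ≤ ((2 * N : ℝ) ^ n)⁻¹ * ((n.choose k : ℝ) * ((2 * N : ℝ) ^ (n - k) * 10 ^ k)) := by gcongr
    _ = _ := by
        have e : (2 * N : ℝ) ^ n = (2 * N : ℝ) ^ (n - k) * (2 * N : ℝ) ^ k := by
          rw [← pow_add]; congr 1; omega
        have e5 : (5 / N : ℝ) = 10 / (2 * N) := by field_simp; norm_num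
        rw [e, e5, div_pow]
        field_simp

/-- There is an absolute constant `c > 0` such that for every `ε ∈ (0,1)`, `n ∈ ℕ`, and
every subspace `R ⊆ ℝ^n` with `dim R ≤ (1-ε)n`, the average `ℓ_1`-distance of the `2^n`
sign vectors `u ∈ {-1,1}^n` to `R` is at least `c ε² n`. -/
theorem cube_vertices_l1_width :
    ∃ c : ℝ, 0 < c ∧
      ∀ ε : ℝ, 0 < ε → ε < 1 → ∀ n : ℕ,
        ∀ R : Submodule ℝ (Fin n → ℝ), (Module.finrank ℝ R : ℝ) ≤ (1 - ε) * n →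
          c * ε ^ 2 * n ≤ ((2 : ℝ) ^ n)⁻¹ *
            ∑ s : Fin n → Bool,
              ⨅ v : R, ∑ i, |(if s i then (1 : ℝ) else -1) - (v : Fin n → ℝ) i| := by
  refine ⟨1/46, by norm_num, ?_⟩
  intro ε hε hε1 n R hR
  change _ ≤ ((2 : ℝ) ^ n)⁻¹ * ∑ u : Fin n → Bool, dst R (fun i => sg (u i))
  have hD0 : 0 ≤ ((2 : ℝ) ^ n)⁻¹ * ∑ u : Fin n → Bool, dst R (fun i => sg (u i)) :=
    mul_nonneg (by positivity) (Finset.sum_nonneg fun _ _ => dst_nonneg R _)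
  rcases Nat.eq_zero_or_pos n with hn | hn
  · have : (n:ℝ) = 0 := by exact_mod_cast hn
    rw [this, mul_zero]; exact hD0
  obtain ⟨k, hk⟩ : ∃ k, k = n - Module.finrank ℝ R := ⟨_, rfl⟩
  have hn' : (0:ℝ) < n := by exact_mod_cast hn
  have hle : Module.finrank ℝ R ≤ n := by simpa using Submodule.finrank_le R
  have hkε : ε * n ≤ k := by
    rw [hk, Nat.cast_sub hle]; linarith
  have hkn : (k:ℝ) ≤ n := by exact_mod_cast (by omega : k ≤ n)
  have hk0 : (0:ℝ) < k := lt_of_lt_of_le (by positivity) hkε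
  obtain ⟨N, hNdef⟩ : ∃ N, N = ⌈45 * (n:ℝ) / k⌉₊ := ⟨_, rfl⟩
  have hN1 : 45 * (n:ℝ) / k ≤ N := by rw [hNdef]; exact Nat.le_ceil _
  have hN2 : (N:ℝ) ≤ 46 * n / k := by
    have h1 : (N:ℝ) < 45 * (n:ℝ) / k + 1 := by
      rw [hNdef]; exact Nat.ceil_lt_add_one (by positivity)
    have h2 : 1 ≤ (n:ℝ) / k := by rwa [le_div_iff₀ hk0, one_mul]
    have h3 : 46 * (n:ℝ) / k = 45 * n / k + n / k := by ring
    linarith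
  have hN0 : (0:ℝ) < N := lt_of_lt_of_le (by positivity) hN1
  have hm := main_exp R N (by exact_mod_cast hN0) k hk
  set D := ((2 : ℝ) ^ n)⁻¹ * ∑ u : Fin n → Bool, dst R (fun i => sg (u i)) with hD
  have he3 : Real.exp 1 ≤ 3 := by linarith [Real.exp_one_lt_d9]
  have hch : (n.choose k : ℝ) ≤ Real.exp k * (n / k) ^ k := by
    have h1 : (n.choose k : ℝ) ≤ (n:ℝ) ^ k / (k.factorial : ℝ) := Nat.choose_le_pow_div k n
    have h2 := Real.pow_div_factorial_le_exp (k:ℝ) hk0.le k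
    calc _ ≤ _ := h1
      _ = (k:ℝ) ^ k / k.factorial * (n / k) ^ k := by rw [div_pow]; field_simp
      _ ≤ _ := by gcongr
  have hfin : Real.exp (-(N * D)) ≤ Real.exp (-k) := by
    calc _ ≤ _ := hm
      _ ≤ (Real.exp k * (n / k) ^ k) * (5 / N) ^ k := by gcongr
      _ = (Real.exp 1 * (n / k * (5 / N))) ^ k := by
          rw [mul_pow, mul_pow, ← Real.exp_nat_mul, mul_one]; ring
      _ ≤ (Real.exp (-1)) ^ k := by
          gcongr
          have h1 : (n:ℝ) / k * (5 / N) ≤ 1 / 9 := by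
            have : 45 * (n:ℝ) / k = 45 * (n / k) := by ring
            rw [this] at hN1
            rw [← mul_div_assoc, div_le_iff₀ hN0]; linarith
          have h2 : Real.exp 1 * Real.exp (-1) = 1 := by rw [← Real.exp_add]; simp
          have p1 := Real.exp_pos 1
          have p2 := Real.exp_pos (-1)
          have h3 : 1/3 ≤ Real.exp (-1) := by nlinarith
          nlinarith
      _ = _ := by rw [← Real.exp_nat_mul]; congr 1; ring
  rw [Real.exp_le_exp] at hfin
  have h1 : (k:ℝ) ≤ 46 * n / k * D := by
    have : (N:ℝ) * D ≤ 46 * n / k * D := by gcongr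
    linarith
  have h2 : (k:ℝ) ^ 2 ≤ 46 * n * D := by
    have : 46 * n / k * D = (46 * n * D) / k := by ring
    rw [this, le_div_iff₀ hk0] at h1
    nlinarith
  have h3 : (ε * n) ^ 2 ≤ (k:ℝ) ^ 2 := by gcongr
  have h4 : n * (1 / 46 * ε ^ 2 * n) ≤ n * D := by nlinarith
  exact le_of_mul_le_mul_left h4 hn'
end

section
/- Let d, m, n_1, …, n_d ∈ ℕ. Then the number S_m(n_1,…,n_d) of signum tensors S ∈ {−1,1}^{n_1×⋯×n_d} with signum rank rank_±(S) ≤ m satisfies S_m(n_1,…,n_d) ≤ Z_max(m(n_1+⋯+n_d), n_1⋯n_d, d). -/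
/-- A tensor `T ∈ ℝ^{n₁×⋯×n_d}` has rank at most `m` if it is a sum of `m` tensors of
the form `u¹_{i₁} ⋯ u^d_{i_d}`. -/
def tensorRankLE {d : ℕ} {n : Fin d → ℕ} (T : ((i : Fin d) → Fin (n i)) → ℝ) (m : ℕ) :
    Prop :=
  ∃ u : Fin m → (i : Fin d) → Fin (n i) → ℝ, ∀ I, T I = ∑ s, ∏ i, u s i (I i)

/-- A signum tensor: all entries are `±1`. -/
def IsSignTensor {d : ℕ} {n : Fin d → ℕ} (S : ((i : Fin d) → Fin (n i)) → ℝ) : Prop :=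
  ∀ I, S I = 1 ∨ S I = -1

/-- The signum rank of a signum tensor `S` is at most `m` if there is a tensor `T` of
rank at most `m`, all of whose entries are nonzero and satisfy `sign(T_I) = S_I`. -/
def signumRankLE {d : ℕ} {n : Fin d → ℕ} (S : ((i : Fin d) → Fin (n i)) → ℝ) (m : ℕ) :
    Prop :=
  ∃ T : ((i : Fin d) → Fin (n i)) → ℝ,
    tensorRankLE T m ∧ ∀ I, T I ≠ 0 ∧ Real.sign (T I) = S I

/-- `Zmax k l s`: the maximal number of sign vectors `(sign p₁(x), …, sign p_l(x))` with
all coordinates nonzero, over `l`-tuples of real polynomials in `k` variables of total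
degree at most `s`. -/
noncomputable def Zmax (k l s : ℕ) : ℕ :=
  sSup {z : ℕ | ∃ p : Fin l → MvPolynomial (Fin k) ℝ,
    (∀ i, (p i).totalDegree ≤ s) ∧
    z = Nat.card {v : Fin l → ℝ | ∃ x : Fin k → ℝ,
      (∀ i, MvPolynomial.eval x (p i) ≠ 0) ∧
      v = fun i => Real.sign (MvPolynomial.eval x (p i))}}

theorem Zmax_aux_bdd (k l s : ℕ) : BddAbove {z : ℕ | ∃ p : Fin l → MvPolynomial (Fin k) ℝ,
    (∀ i, (p i).totalDegree ≤ s) ∧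
    z = Nat.card {v : Fin l → ℝ | ∃ x : Fin k → ℝ,
      (∀ i, MvPolynomial.eval x (p i) ≠ 0) ∧
      v = fun i => Real.sign (MvPolynomial.eval x (p i))}} := by
  have hfin : (Set.pi Set.univ (fun _ : Fin l => ({-1, 0, 1} : Set ℝ))).Finite :=
    Set.Finite.pi' (fun _ => by simp) |>.subset (fun x hx i => hx i trivial)
  refine ⟨Nat.card (Set.pi Set.univ (fun _ : Fin l => ({-1, 0, 1} : Set ℝ))), ?_⟩
  rintro z ⟨p, -, rfl⟩
  apply Nat.card_mono hfin
  rintro v ⟨x, -, rfl⟩ i -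
  rcases Real.sign_apply_eq (MvPolynomial.eval x (p i)) with h | h | h <;> simp [h]

theorem count_low_signum_rank_tensors (d m : ℕ) (n : Fin d → ℕ) :
    Nat.card {S : ((i : Fin d) → Fin (n i)) → ℝ | IsSignTensor S ∧ signumRankLE S m} ≤
      Zmax (m * ∑ i, n i) (∏ i, n i) d := by
  classical
  have e : (Fin m × ((i : Fin d) × Fin (n i))) ≃ Fin (m * ∑ i, n i) :=
    Fintype.equivFinOfCardEq (by simp)
  have f : ((i : Fin d) → Fin (n i)) ≃ Fin (∏ i, n i) :=
    Fintype.equivFinOfCardEq (by simp)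
  let p : Fin (∏ i, n i) → MvPolynomial (Fin (m * ∑ i, n i)) ℝ := fun j =>
    ∑ s, ∏ i, MvPolynomial.X (e (s, ⟨i, f.symm j i⟩))
  have hdeg : ∀ j, (p j).totalDegree ≤ d := by
    intro j
    refine MvPolynomial.totalDegree_finsetSum_le (fun s _ => ?_)
    refine (MvPolynomial.totalDegree_finsetProd _ _).trans ?_
    simp
  refine le_trans ?_ (le_csSup (Zmax_aux_bdd _ _ _) ⟨p, hdeg, rfl⟩)
  have hfin : (Set.pi Set.univ (fun _ : Fin (∏ i, n i) => ({-1, 0, 1} : Set ℝ))).Finite :=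
    Set.Finite.pi' (fun _ => by simp) |>.subset (fun x hx i => hx i trivial)
  have hfin2 : {v : Fin (∏ i, n i) → ℝ | ∃ x : Fin (m * ∑ i, n i) → ℝ,
      (∀ i, MvPolynomial.eval x (p i) ≠ 0) ∧
      v = fun i => Real.sign (MvPolynomial.eval x (p i))}.Finite := by
    apply hfin.subset
    rintro v ⟨x, -, rfl⟩ i -
    rcases Real.sign_apply_eq (MvPolynomial.eval x (p i)) with h | h | h <;> simp [h]
  have := hfin2.to_subtype
  refine Nat.card_le_card_of_injective (fun S => ⟨fun j => S.1 (f.symm j), ?_⟩) ?_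
  · obtain ⟨S, -, T, ⟨u, hu⟩, hT⟩ := S
    have key : ∀ j, MvPolynomial.eval
        (fun a => u (e.symm a).1 (e.symm a).2.1 (e.symm a).2.2) (p j) = T (f.symm j) := by
      intro j
      simp only [p, hu, map_sum, map_prod, MvPolynomial.eval_X]
      refine Finset.sum_congr rfl (fun s _ => Finset.prod_congr rfl (fun i _ => ?_))
      exact congrArg (fun q : Fin m × ((i : Fin d) × Fin (n i)) => u q.1 q.2.1 q.2.2)
        (e.symm_apply_apply (s, ⟨i, f.symm j i⟩))
    refine ⟨fun a => u (e.symm a).1 (e.symm a).2.1 (e.symm a).2.2, fun j => ?_, ?_⟩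
    · rw [key]; exact (hT _).1
    · funext j
      rw [key]; exact (hT _).2.symm
  · intro S S' h
    apply Subtype.ext
    funext I
    have := congrFun (congrArg Subtype.val h) (f I)
    simpa using this
end

section
/- For every d ∈ ℕ there exist constants c(d) > 0 and ε₀(d) > 0 such that for every ε ∈ (0, ε₀(d)) and all n_1, …, n_d ∈ ℕ, setting N = n_1 ⋯ n_d, the number of signum tensors S ∈ {−1,1}^{n_1×⋯×n_d} with rank_±(S) ≤ ε N / max_j{n_j} is at most 2^{N c(d) ε log₂(1/ε)}. -/
section Helpers

open MvPolynomial


theorem wr_lift {A : Type} (y : A → ℝ) (hy : AlgebraicIndependent ℚ y) (m : A → ℝ) :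
    ∃ ψ : ℝ →+* TrivSqZeroExt ℝ ℝ, (∀ r, (ψ r).fst = r) ∧ ∀ i, (ψ (y i)).snd = m i := by
  classical
  obtain ⟨B, hB, hb⟩ := exists_isTranscendenceBasis_superset hy.coe_range
  let P := MvPolynomial B ℚ
  let φ : P →ₐ[ℚ] ℝ := aeval (fun b : B => (b : ℝ))
  have hφX : ∀ b : B, φ (X b) = b := fun b => aeval_X _ _
  have hφ : Function.Injective φ := hb.1
  let : Algebra P ℝ := φ.toRingHom.toAlgebra
  have hmap : ∀ p : P, algebraMap P ℝ p = φ p := fun p => rfl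
  have : FaithfulSMul P ℝ := (faithfulSMul_iff_algebraMap_injective P ℝ).2 hφ
  have halg : Algebra.IsAlgebraic P ℝ := by
    have h1 := hb.isAlgebraic
    constructor
    intro r
    obtain ⟨q, hq0, hq⟩ := h1.isAlgebraic r
    let e := hb.1.aevalEquiv
    refine ⟨q.map (e.symm : _ →+* _), ?_, ?_⟩
    · rwa [Ne, Polynomial.map_eq_zero_iff]
      exact e.symm.injective
    · rw [Polynomial.aeval_def, Polynomial.eval₂_map, ← hq, Polynomial.aeval_def]
      congr 1
      ext t
      obtain ⟨s, rfl⟩ := e.surjective t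
      simp only [RingHom.comp_apply, hmap]
      have : (e.symm : _ →+* _) (e s) = s := e.symm_apply_apply s
      rw [this]
      exact (hb.1.algebraMap_aevalEquiv s).symm
  let : Algebra (FractionRing P) ℝ := FractionRing.liftAlgebra P ℝ
  have : IsScalarTower P (FractionRing P) ℝ := inferInstance
  have : Algebra.IsAlgebraic (FractionRing P) ℝ :=
    (IsFractionRing.comap_isAlgebraic_iff (A := P) (K := FractionRing P) (C := ℝ)).1 halg
  have : CharZero (FractionRing P) := inferInstance
  have : Algebra.FormallySmooth P (FractionRing P) :=
    Algebra.FormallySmooth.of_isLocalization (nonZeroDivisors P)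
  have : Algebra.FormallyEtale (FractionRing P) ℝ := Algebra.FormallyEtale.of_isSeparable _ _
  have : Algebra.FormallySmooth P ℝ := Algebra.FormallySmooth.comp P (FractionRing P) ℝ
  have hyinj := hy.injective
  let m' : B → ℝ := fun b => if h : ∃ i, y i = b then m h.choose else 0
  let g : P →ₐ[ℚ] TrivSqZeroExt ℝ ℝ :=
    aeval (fun b : B => TrivSqZeroExt.inl (b : ℝ) + TrivSqZeroExt.inr (m' b))
  have hgX : ∀ b : B, g (X b) = TrivSqZeroExt.inl (b : ℝ) + TrivSqZeroExt.inr (m' b) :=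
    fun b => aeval_X _ _
  let : Algebra P (TrivSqZeroExt ℝ ℝ) := g.toRingHom.toAlgebra
  have hgmap : ∀ p : P, algebraMap P (TrivSqZeroExt ℝ ℝ) p = g p := fun p => rfl
  let F : TrivSqZeroExt ℝ ℝ →ₐ[P] ℝ :=
    { TrivSqZeroExt.fstHom ℚ ℝ ℝ with
      commutes' := by
        intro p
        rw [hmap, hgmap]
        change ((TrivSqZeroExt.fstHom ℚ ℝ ℝ).comp g) p = φ p
        congr 1
        ext b
        simp [g, φ] }
  have hF : ∀ z, F z = z.fst := fun z => rfl
  have hFs : Function.Surjective F := fun r => ⟨TrivSqZeroExt.inl r, by simp [hF]⟩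
  have hker : IsNilpotent (RingHom.ker (F : TrivSqZeroExt ℝ ℝ →+* ℝ)) := by
    refine ⟨2, ?_⟩
    have key : ∀ I : Ideal (TrivSqZeroExt ℝ ℝ), I * I ≤ ⊥ → I ^ 2 = ⊥ := by
      intro I h
      rw [pow_two]
      exact eq_bot_iff.2 h
    refine key _ (Ideal.mul_le.2 ?_)
    intro r hr s hs
    have hr' : r.fst = 0 := hr
    have hs' : s.fst = 0 := hs
    rw [Ideal.mem_bot]
    ext <;> simp [hr', hs']
  let ψ := Algebra.FormallySmooth.liftOfSurjective (AlgHom.id P ℝ) F hFs hker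
  refine ⟨ψ.toRingHom, fun r => ?_, fun i => ?_⟩
  · exact Algebra.FormallySmooth.liftOfSurjective_apply (AlgHom.id P ℝ) F hFs hker r
  · have hi : y i ∈ B := hB ⟨i, rfl⟩
    have h1 : y i = algebraMap P ℝ (X ⟨y i, hi⟩) := by
      rw [hmap, hφX]
    have h2 : ψ (y i) = g (X ⟨y i, hi⟩) := by
      conv_lhs => rw [h1]
      rw [ψ.commutes, hgmap]
    have h3 : m' ⟨y i, hi⟩ = m i := by
      have h : ∃ j, y j = y i := ⟨i, rfl⟩
      have : m' ⟨y i, hi⟩ = m h.choose := dif_pos h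
      rw [this, hyinj h.choose_spec]
    change (ψ (y i)).snd = m i
    rw [h2, hgX, h3]
    simp

theorem wr_snd {σ : Type} [Fintype σ] (ψ : ℝ →+* TrivSqZeroExt ℝ ℝ) (h : ∀ r, (ψ r).fst = r)
    (x : σ → ℝ) (f : MvPolynomial σ ℚ) :
    (ψ (aeval x f)).snd = ∑ l, aeval x (pderiv l f) * (ψ (x l)).snd := by
  classical
  induction f using MvPolynomial.induction_on with
  | C a =>
    have : ψ (aeval x (C a : MvPolynomial σ ℚ)) = algebraMap ℚ _ a := by
      rw [aeval_C]
      exact RingHom.congr_fun (Subsingleton.elim (ψ.comp (algebraMap ℚ ℝ)) (algebraMap ℚ _)) a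
    rw [this]
    simp [TrivSqZeroExt.algebraMap_eq_inl']
  | add p q hp hq => simp only [map_add, TrivSqZeroExt.snd_add, hp, hq, add_mul, Finset.sum_add_distrib]
  | mul_X p i hp =>
    simp only [map_mul, aeval_X, TrivSqZeroExt.snd_mul, h, hp, pderiv_mul, pderiv_X, map_add]
    simp only [add_mul, Finset.sum_add_distrib, Pi.single_apply]
    simp [apply_ite, ite_mul]
    rw [add_comm]
    congr 1
    rw [Finset.sum_mul]
    exact Finset.sum_congr rfl fun _ _ => by ring

theorem wr_grad {A σ : Type} [Fintype A] [Fintype σ] (f : A → MvPolynomial σ ℚ) (x : σ → ℝ)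
    (hx : AlgebraicIndependent ℚ (fun i => aeval x (f i))) :
    LinearIndependent ℝ (fun i l => aeval x (pderiv l (f i)) : A → σ → ℝ) := by
  classical
  rw [Fintype.linearIndependent_iff]
  intro c hc j
  obtain ⟨ψ, h1, h2⟩ := wr_lift _ hx (Pi.single j 1)
  have h3 : ∑ i, c i * (ψ (aeval x (f i))).snd = 0 := by
    simp_rw [wr_snd ψ h1, Finset.mul_sum]
    rw [Finset.sum_comm]
    refine Finset.sum_eq_zero fun l _ => ?_
    have := congrFun hc l
    simp only [Finset.sum_apply, Pi.smul_apply, smul_eq_mul, Pi.zero_apply] at this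
    simp_rw [← mul_assoc, ← Finset.sum_mul, this, zero_mul]
  simp only [h2] at h3
  simpa [Pi.single_apply] using h3


theorem wr_deg_comp {τ : Type} [Fintype τ] (Φ : τ → MvPolynomial τ ℚ) (d : ℕ)
    (hΦ : ∀ t, (Φ t).totalDegree ≤ d) (q : MvPolynomial τ ℚ) :
    (aeval Φ q).totalDegree ≤ d * q.totalDegree := by
  rw [aeval_def, eval₂_eq']
  refine totalDegree_finsetSum_le fun α hα => ?_
  refine (totalDegree_mul _ _).trans ?_
  rw [algebraMap_eq, totalDegree_C, zero_add]
  refine (totalDegree_finsetProd _ _).trans ?_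
  have h1 : ∑ i, ((Φ i) ^ α i).totalDegree ≤ ∑ i, d * α i := by
    refine Finset.sum_le_sum fun i _ => (totalDegree_pow _ _).trans ?_
    rw [mul_comm]
    exact Nat.mul_le_mul_right _ (hΦ i)
  refine h1.trans ?_
  rw [← Finset.mul_sum]
  refine Nat.mul_le_mul_left _ ?_
  have h2 := le_totalDegree hα
  rwa [Finsupp.sum_fintype _ _ (fun _ => rfl)] at h2

theorem wr_multichoose (M n : ℕ) :
    ∑ k ∈ Finset.range (n + 1), M.multichoose k = (M + n).choose M := by
  have h : ∑ k ∈ Finset.range (n + 1), M.multichoose k = (M + 1).multichoose n := by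
    induction n with
    | zero => simp
    | succ n ih => rw [Finset.sum_range_succ, ih, Nat.multichoose_succ_succ, add_comm]
  rw [h, Nat.multichoose_eq, show M + 1 + n - 1 = M + n by omega]
  exact Nat.choose_symm_of_eq_add (by omega)

theorem wr_finrank {τ : Type} [Fintype τ] (n : ℕ) :
    Module.Finite ℚ (restrictTotalDegree τ ℚ n) ∧
    Module.finrank ℚ (restrictTotalDegree τ ℚ n) =
      (Fintype.card τ + n).choose (Fintype.card τ) := by
  classical
  let S : Finset (τ →₀ ℕ) := (Finset.range (n + 1)).biUnion fun k =>
    (Finset.univ : Finset τ).finsuppAntidiag k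
  have hS : { e : τ →₀ ℕ | (e.sum fun _ e => e) ≤ n } = (S : Set (τ →₀ ℕ)) := by
    ext e
    simp [S, Finset.mem_finsuppAntidiag, Finsupp.sum_fintype]
  have hcard : S.card = (Fintype.card τ + n).choose (Fintype.card τ) := by
    rw [Finset.card_biUnion]
    · simp only [Finset.card_finsuppAntidiag_nat_eq_multichoose, Finset.card_univ]
      exact wr_multichoose _ _
    · intro i _ j _ hij
      rw [Function.onFun, Finset.disjoint_left]
      intro e he he'
      rw [Finset.mem_finsuppAntidiag] at he he'
      exact hij (he.1.symm.trans he'.1)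
  unfold restrictTotalDegree
  rw [hS]
  let b := basisRestrictSupport ℚ (S : Set (τ →₀ ℕ))
  have : Fintype (S : Set (τ →₀ ℕ)) := inferInstance
  refine ⟨Module.Finite.of_basis b, ?_⟩
  rw [Module.finrank_eq_card_basis b, ← hcard]
  simp

theorem wr_asymp (d r M : ℕ) (hr : d ^ M ≤ r) :
    ∃ n : ℕ, (M + (d * n + r)).choose M < (r + 1) * (M + n).choose M := by
  have h1 : Filter.Tendsto (fun n : ℕ => ((d : ℝ) + ((r + M : ℕ) : ℝ) / n) ^ M) Filter.atTop
      (nhds (((d : ℝ) + 0) ^ M)) :=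
    (tendsto_const_nhds.add (tendsto_const_div_atTop_nhds_zero_nat _)).pow M
  have h2 : ((d : ℝ) + 0) ^ M < r + 1 := by
    have : ((d : ℝ)) ^ M ≤ r := by exact_mod_cast hr
    simpa using by linarith
  obtain ⟨n, hn, hn0⟩ := ((h1.eventually (gt_mem_nhds h2)).and (Filter.eventually_gt_atTop 0)).exists
  refine ⟨n, ?_⟩
  have hn0' : (0 : ℝ) < n := by exact_mod_cast hn0
  have h3 : (M + (d * n + r)) ^ M < (r + 1) * n ^ M := by
    have : ((d : ℝ) + ((r + M : ℕ) : ℝ) / n) = (M + (d * n + r)) / n := by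
      field_simp
      push_cast
      ring
    rw [this, div_pow, div_lt_iff₀ (by positivity)] at hn
    exact_mod_cast hn
  have h4 : M.factorial * (M + (d * n + r)).choose M ≤ (M + (d * n + r)) ^ M := by
    rw [← Nat.descFactorial_eq_factorial_mul_choose]
    exact Nat.descFactorial_le_pow _ _
  have h5 : n ^ M ≤ M.factorial * (M + n).choose M := by
    rw [add_comm M n, ← Nat.ascFactorial_eq_factorial_mul_choose]
    exact (Nat.pow_le_pow_left (Nat.le_succ n) M).trans (Nat.pow_succ_le_ascFactorial _ _)
  have h6 : M.factorial * (M + (d * n + r)).choose M <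
      M.factorial * ((r + 1) * (M + n).choose M) := by
    calc _ ≤ _ := h4
      _ < _ := h3
      _ ≤ (r + 1) * (M.factorial * (M + n).choose M) := Nat.mul_le_mul_left _ h5
      _ = _ := by ring
  exact lt_of_mul_lt_mul_left h6 (Nat.zero_le _)

theorem wr_sep {τ : Type} [Fintype τ] (Z : Finset (τ → ℝ)) :
    ∃ c : τ → ℚ, Set.InjOn (fun z : τ → ℝ => ∑ t, (c t : ℝ) * z t) Z := by
  classical
  by_contra! hcon
  let ι := {p : Z × Z // p.1 ≠ p.2}
  let L : ι → ((τ → ℚ) →ₗ[ℚ] ℝ) := fun p =>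
    Fintype.linearCombination ℚ (fun t => p.1.1.1 t - p.1.2.1 t)
  have hcov : ⋃ i : ι, ((LinearMap.ker (L i) : Submodule ℚ (τ → ℚ)) : Set (τ → ℚ)) = Set.univ := by
    rw [Set.eq_univ_iff_forall]
    intro c
    have := hcon c
    simp only [Set.InjOn, not_forall] at this
    obtain ⟨z, hz, z', hz', h, hne⟩ := this
    refine Set.mem_iUnion.2 ⟨⟨(⟨z, hz⟩, ⟨z', hz'⟩), fun h => hne (congrArg Subtype.val h)⟩, ?_⟩
    simp only [L, SetLike.mem_coe, LinearMap.mem_ker, Fintype.linearCombination_apply]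
    simp only [Rat.smul_def, mul_sub, Finset.sum_sub_distrib]
    exact sub_eq_zero.2 h
  obtain ⟨i, hi⟩ := Subspace.exists_eq_top_of_iUnion_eq_univ hcov
  apply i.2
  ext t
  have h1 : (Pi.single t 1 : τ → ℚ) ∈ LinearMap.ker (L i) := by rw [hi]; trivial
  rw [LinearMap.mem_ker] at h1
  simp only [L, Fintype.linearCombination_apply_single, one_smul] at h1
  exact sub_eq_zero.1 h1

theorem wr_bezout {τ : Type} [Fintype τ] (Φ : τ → MvPolynomial τ ℚ) (d : ℕ)
    (hΦ : ∀ t, (Φ t).totalDegree ≤ d) (p : τ → ℝ) (hp : AlgebraicIndependent ℚ p)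
    (Z : Finset (τ → ℝ)) (hZ : ∀ z ∈ Z, ∀ t, aeval z (Φ t) = p t) :
    Z.card ≤ d ^ Fintype.card τ := by
  classical
  obtain ⟨c, hc⟩ := wr_sep Z
  set r := d ^ Fintype.card τ with hr
  obtain ⟨n, hn⟩ := wr_asymp d r (Fintype.card τ) le_rfl
  let g : MvPolynomial τ ℚ := ∑ t, c t • X t
  have hg : g.totalDegree ≤ 1 :=
    totalDegree_finsetSum_le fun t _ => (totalDegree_smul_le _ _).trans (totalDegree_X t).le
  have hgz : ∀ z : τ → ℝ, aeval z g = ∑ t, (c t : ℝ) * z t := by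
    intro z
    simp only [g, map_sum, map_smul, aeval_X, Rat.smul_def]
  let V := restrictTotalDegree τ ℚ n
  let W := restrictTotalDegree τ ℚ (d * n + r)
  obtain ⟨hV1, hV2⟩ := wr_finrank (τ := τ) n
  obtain ⟨hW1, hW2⟩ := wr_finrank (τ := τ) (d * n + r)
  let Ψ0 : (Fin (r + 1) → V) →ₗ[ℚ] MvPolynomial τ ℚ :=
    ∑ j : Fin (r + 1), (LinearMap.mulRight ℚ (g ^ (j : ℕ))) ∘ₗ (aeval Φ).toLinearMap ∘ₗ V.subtype ∘ₗ
      LinearMap.proj j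
  have hΨ0 : ∀ q, Ψ0 q = ∑ j, aeval Φ (q j : MvPolynomial τ ℚ) * g ^ (j : ℕ) := by
    intro q
    simp [Ψ0]
  have hmem : ∀ q, Ψ0 q ∈ W := by
    intro q
    rw [mem_restrictTotalDegree, hΨ0]
    refine totalDegree_finsetSum_le fun j _ => (totalDegree_mul _ _).trans ?_
    have h1 := wr_deg_comp Φ d hΦ (q j : MvPolynomial τ ℚ)
    have h2 := (mem_restrictTotalDegree τ n _).1 (q j).2
    have h3 := totalDegree_pow g (j : ℕ)
    have h4 : (j : ℕ) * g.totalDegree ≤ r * 1 := Nat.mul_le_mul (by omega) hg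
    have h5 := Nat.mul_le_mul_left d h2
    omega
  let Ψ := Ψ0.codRestrict W hmem
  have hker : LinearMap.ker Ψ ≠ ⊥ := by
    have : Module.Finite ℚ V := hV1
    have : Module.Finite ℚ W := hW1
    apply LinearMap.ker_ne_bot_of_finrank_lt
    rw [Module.finrank_pi_fintype, Finset.sum_const, Finset.card_univ, Fintype.card_fin]
    change Module.finrank ℚ W < (r + 1) * Module.finrank ℚ V
    rw [show Module.finrank ℚ W = _ from hW2, show Module.finrank ℚ V = _ from hV2]
    exact hn
  obtain ⟨q, hq, hq0⟩ := (Submodule.ne_bot_iff _).1 hker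
  have hq1 : ∑ j, aeval Φ (q j : MvPolynomial τ ℚ) * g ^ (j : ℕ) = 0 := by
    rw [← hΨ0]
    exact congrArg Subtype.val (LinearMap.mem_ker.1 hq)
  let R : Polynomial ℝ := ∑ j : Fin (r + 1),
    Polynomial.monomial (j : ℕ) (aeval p (q j : MvPolynomial τ ℚ))
  have hR0 : R ≠ 0 := by
    obtain ⟨j, hj⟩ := Function.ne_iff.1 hq0
    intro h
    have h1 : R.coeff j = aeval p (q j : MvPolynomial τ ℚ) := by
      simp only [R, Polynomial.finsetSum_coeff, Polynomial.coeff_monomial]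
      rw [Finset.sum_eq_single j]
      · simp
      · intro b _ hb
        rw [if_neg]
        exact fun h => hb (Fin.ext h)
      · simp
    rw [h, Polynomial.coeff_zero] at h1
    apply hj
    apply Subtype.ext
    exact hp (by rw [← h1]; simp)
  have hRdeg : R.natDegree ≤ r := by
    refine Polynomial.natDegree_sum_le_of_forall_le _ _ fun j _ => ?_
    exact (Polynomial.natDegree_monomial_le _).trans (by omega)
  have hroot : ∀ z ∈ Z, R.eval (∑ t, (c t : ℝ) * z t) = 0 := by
    intro z hz
    have h1 := congrArg (aeval z) hq1
    have h2 : ∀ q : MvPolynomial τ ℚ, aeval z (aeval Φ q) = aeval p q := by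
      intro q
      have : (aeval z).comp (aeval Φ) = (aeval p : MvPolynomial τ ℚ →ₐ[ℚ] ℝ) := by
        ext t
        simp [hZ z hz t]
      rw [← this]; rfl
    simp only [map_sum, map_mul, map_pow, h2, map_zero, hgz] at h1
    simpa [R, Polynomial.eval_finsetSum] using h1
  calc Z.card = (Z.image fun z => ∑ t, (c t : ℝ) * z t).card := (Finset.card_image_of_injOn hc).symm
    _ ≤ R.roots.toFinset.card := by
        apply Finset.card_le_card
        intro y hy
        obtain ⟨z, hz, rfl⟩ := Finset.mem_image.1 hy
        rw [Multiset.mem_toFinset, Polynomial.mem_roots hR0]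
        exact hroot z hz
    _ ≤ R.roots.card := Multiset.toFinset_card_le _
    _ ≤ R.natDegree := Polynomial.card_roots' _
    _ ≤ r := hRdeg

theorem wr_scale {ι : Type} (p : ι → ℝ) (hp : AlgebraicIndependent ℚ p) (s : ι → ℚ)
    (hs : ∀ i, s i ≠ 0) : AlgebraicIndependent ℚ (fun i => (s i : ℝ) * p i) := by
  have h : ∀ i, Transcendental ℚ (Polynomial.C (s i) * Polynomial.X) := by
    intro i
    have hd : (Polynomial.C (s i) * Polynomial.X).natDegree = 1 :=
      Polynomial.natDegree_C_mul_X _ (hs i)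
    refine Polynomial.transcendental _ (by rw [hd]; exact one_ne_zero) ?_
    rw [mem_nonZeroDivisors_iff_ne_zero]
    simpa using hs i
  have := hp.polynomial_aeval_of_transcendental h
  simpa using this

theorem wr_generic (ι : Type) [Finite ι] (η : ℝ) (hη : 0 < η) :
    ∃ p : ι → ℝ, AlgebraicIndependent ℚ p ∧ ∀ i, 0 < p i ∧ p i < η := by
  obtain ⟨s, hs⟩ := exists_isTranscendenceBasis ℚ ℝ
  have hinf : Infinite s := by
    by_contra hfin
    rw [not_infinite_iff_finite] at hfin
    have h1 := hs.isAlgebraic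
    have h2 : Countable (MvPolynomial s ℚ) := by
      rw [← Cardinal.mk_le_aleph0_iff]
      refine MvPolynomial.cardinalMk_le_max_lift.trans ?_
      simp [Cardinal.mk_le_aleph0]
    have h3 : Countable (Algebra.adjoin ℚ (Set.range ((↑) : s → ℝ))) :=
      hs.1.aevalEquiv.toEquiv.symm.countable_iff.2 h2
    have h4 := Algebra.IsAlgebraic.cardinalMk_le_max
      (Algebra.adjoin ℚ (Set.range ((↑) : s → ℝ))) ℝ
    rw [max_eq_right (Cardinal.mk_le_aleph0_iff.2 h3), Cardinal.mk_real] at h4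
    exact absurd h4 (not_le.2 Cardinal.aleph0_lt_continuum)
  have := Fintype.ofFinite ι
  let e : ι ↪ s := (Fintype.equivFin ι).toEmbedding.trans
    ((Fin.valEmbedding).trans (Infinite.natEmbedding s))
  have hq := hs.1.comp e e.injective
  have hne : ∀ i, ((e i : s) : ℝ) ≠ 0 := fun i => hq.ne_zero i
  have hex : ∀ i, ∃ t : ℚ, 0 < (t : ℝ) * (e i : ℝ) ∧ (t : ℝ) * (e i : ℝ) < η := by
    intro i
    rcases lt_or_gt_of_ne (hne i) with h | h
    · obtain ⟨t, h1, h2⟩ := exists_rat_btwn (show η / (e i : ℝ) < 0 from div_neg_of_pos_of_neg hη h)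
      refine ⟨t, mul_pos_of_neg_of_neg h2 h, ?_⟩
      exact (div_lt_iff_of_neg h).1 h1
    · obtain ⟨t, h1, h2⟩ := exists_rat_btwn (show 0 < η / (e i : ℝ) from div_pos hη h)
      exact ⟨t, mul_pos h1 h, (lt_div_iff₀ h).1 h2⟩
  choose t ht1 ht2 using hex
  refine ⟨fun i => (t i : ℝ) * (e i : ℝ), wr_scale _ hq t ?_, fun i => ⟨ht1 i, ht2 i⟩⟩
  intro i h
  have := ht1 i
  simp [h] at this

theorem wr_deriv {σ : Type} [Fintype σ] (f : MvPolynomial σ ℚ) (x : σ → ℝ) :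
    HasStrictFDerivAt (fun x : σ → ℝ => (aeval x f : ℝ))
      (∑ l, (aeval x (pderiv l f) : ℝ) • (ContinuousLinearMap.proj l : (σ → ℝ) →L[ℝ] ℝ)) x := by
  classical
  induction f using MvPolynomial.induction_on with
  | C a => simpa using hasStrictFDerivAt_const (𝕜 := ℝ) (a : ℝ) x
  | add p q hp hq =>
    convert! hp.add hq using 1
    · ext x; simp
    · simp [add_smul, Finset.sum_add_distrib]
  | mul_X p i hp =>
    have hi : HasStrictFDerivAt (fun x : σ → ℝ => x i)
      (ContinuousLinearMap.proj i : (σ → ℝ) →L[ℝ] ℝ) x :=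
        (ContinuousLinearMap.proj i : (σ → ℝ) →L[ℝ] ℝ).hasStrictFDerivAt
    convert! hp.mul hi using 1
    · ext x; simp
    · ext v
      have h1 : ∀ l, (aeval x (pderiv l (p * X i)) : ℝ) * v l =
          x i * (aeval x (pderiv l p) * v l) + (if l = i then aeval x p * v i else 0) := by
        intro l
        by_cases h : l = i
        · subst h
          simp [pderiv_mul]
          ring
        · have h' : i ≠ l := fun e => h e.symm
          simp [pderiv_mul, pderiv_X, h, h']
          ring
      simp [-Derivation.leibniz, ContinuousLinearMap.sum_apply, h1, Finset.sum_add_distrib,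
        ← Finset.mul_sum]
      ring

theorem wr_kkt {σ ι : Type} [Fintype σ] [Fintype ι] (f : ι → MvPolynomial σ ℚ)
    (p : σ ⊕ ι → ℝ) (hp : AlgebraicIndependent ℚ p)
    (s : ι → ℚ) (hs : ∀ i, s i = 1 ∨ s i = -1)
    (hx : ∃ x : σ → ℝ, ∀ i, p (.inr i) ≤ s i * aeval x (f i)) :
    ∃ (A : Finset ι) (x : σ → ℝ) (lam : ι → ℝ), A.card ≤ Fintype.card σ ∧
      (∀ i, p (.inr i) ≤ s i * aeval x (f i)) ∧
      (∀ i ∈ A, aeval x (f i) = s i * p (.inr i)) ∧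
      ∀ l, x l - ∑ i ∈ A, lam i * aeval x (pderiv l (f i)) = p (.inl l) := by
  classical
  obtain ⟨x0, hx0⟩ := hx
  have hcont : ∀ i, Continuous (fun x : σ → ℝ => (aeval x (f i) : ℝ)) := by
    intro i
    rw [continuous_iff_continuousAt]
    exact fun x => (wr_deriv (f i) x).continuousAt
  let φ : (σ → ℝ) → ℝ := fun x => ∑ l, (x l - p (.inl l)) ^ 2
  have hφc : Continuous φ := by fun_prop
  let T : Set (σ → ℝ) := {x | (∀ i, p (.inr i) ≤ s i * aeval x (f i)) ∧ φ x ≤ φ x0}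
  have hTc : IsClosed T := by
    refine IsClosed.inter ?_ (isClosed_le hφc continuous_const)
    have : {x : σ → ℝ | ∀ i, p (.inr i) ≤ s i * aeval x (f i)} =
      ⋂ i, {x : σ → ℝ | p (.inr i) ≤ s i * aeval x (f i)} := by ext; simp
    change IsClosed {x : σ → ℝ | ∀ i, p (.inr i) ≤ s i * aeval x (f i)}
    rw [this]
    exact isClosed_iInter fun i => isClosed_le continuous_const (continuous_const.mul (hcont i))
  have hTb : T ⊆ Metric.closedBall (fun l => p (.inl l)) (Real.sqrt (φ x0)) := by
    intro x hx
    rw [Metric.mem_closedBall, dist_pi_le_iff (Real.sqrt_nonneg _)]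
    intro l
    rw [Real.dist_eq]
    apply Real.abs_le_sqrt
    exact (Finset.single_le_sum (f := fun l => (x l - p (.inl l)) ^ 2)
      (fun l _ => sq_nonneg _) (Finset.mem_univ l)).trans hx.2
  have hTk : IsCompact T := (isCompact_closedBall _ _).of_isClosed_subset hTc hTb
  obtain ⟨x, hxT, hmin⟩ := hTk.exists_isMinOn ⟨x0, hx0, le_rfl⟩ hφc.continuousOn
  let A : Finset ι := Finset.univ.filter fun i => p (.inr i) = s i * aeval x (f i)
  have hss : ∀ i, (s i : ℝ) * s i = 1 := by
    intro i; rcases hs i with h | h <;> simp [h]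
  have hA : ∀ i ∈ A, aeval x (f i) = s i * p (.inr i) := by
    intro i hi
    have := (Finset.mem_filter.1 hi).2
    rw [this, ← mul_assoc, hss, one_mul]
  have hs0 : ∀ i, s i ≠ 0 := by
    intro i; rcases hs i with h | h <;> simp [h]
  have hind : AlgebraicIndependent ℚ (fun i : A => (aeval x (f i) : ℝ)) := by
    have h1 := hp.comp (fun i : A => Sum.inr (i : ι))
      (Sum.inr_injective.comp Subtype.val_injective)
    have h2 := wr_scale _ h1 (fun i => s i) (fun i => hs0 i)
    convert h2 using 2 with i
    exact hA i i.2
  have hlin := wr_grad (fun i : A => f i) x hind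
  have hcard : A.card ≤ Fintype.card σ := by
    have := hlin.fintype_card_le_finrank
    simpa using this
  -- local minimum on the equality set
  have hloc : IsLocalExtrOn φ {y | ∀ i : A, (aeval y (f i) : ℝ) = aeval x (f i)} x := by
    left
    have hev : ∀ᶠ y in nhds x, ∀ i, i ∉ A → p (.inr i) < s i * aeval y (f i) := by
      rw [Filter.eventually_all]
      intro i
      by_cases hi : i ∈ A
      · simp [hi]
      · have h1 : p (.inr i) < s i * aeval x (f i) := by
          refine lt_of_le_of_ne (hxT.1 i) fun h => hi ?_
          simp [A, h]
        have h2 := ((continuous_const.mul (hcont i)).tendsto x).eventually (lt_mem_nhds h1)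
        filter_upwards [h2] with y hy _ using hy
    change ∀ᶠ y in nhdsWithin x _, φ x ≤ φ y
    filter_upwards [nhdsWithin_le_nhds hev, self_mem_nhdsWithin] with y hy1 hy2
    by_contra hlt
    push Not at hlt
    refine absurd (hmin (a := y) ⟨fun i => ?_, hlt.le.trans hxT.2⟩) (not_le.2 hlt)
    by_cases hi : i ∈ A
    · have := hy2 ⟨i, hi⟩
      simp only at this
      rw [this]
      exact hxT.1 i
    · exact (hy1 i hi).le
  have hφ' : HasStrictFDerivAt φ (∑ l, (2 * (x l - p (.inl l))) •
      (ContinuousLinearMap.proj l : (σ → ℝ) →L[ℝ] ℝ)) x := by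
    have : ∀ l ∈ (Finset.univ : Finset σ), HasStrictFDerivAt
        (fun x : σ → ℝ => (x l - p (.inl l)) ^ 2)
        ((2 * (x l - p (.inl l))) • (ContinuousLinearMap.proj l : (σ → ℝ) →L[ℝ] ℝ)) x := by
      intro l _
      have h1 := ((ContinuousLinearMap.proj l : (σ → ℝ) →L[ℝ] ℝ).hasStrictFDerivAt
        (x := x)).sub_const (p (.inl l))
      have h2 := h1.pow 2
      simpa using h2
    exact HasStrictFDerivAt.fun_sum this
  obtain ⟨Λ, Λ0, hne, heq⟩ := hloc.exists_multipliers_of_hasStrictFDerivAt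
    (fun i : A => wr_deriv (f i) x) hφ'
  have hl : ∀ l, ∑ i, Λ i * aeval x (pderiv l (f i)) + Λ0 * (2 * (x l - p (.inl l))) = 0 := by
    intro l
    have := congrArg (fun L : (σ → ℝ) →L[ℝ] ℝ => L (Pi.single l 1)) heq
    simpa [Pi.single_apply] using this
  have hΛ0 : Λ0 ≠ 0 := by
    intro h0
    apply hne
    rw [Prod.mk_eq_zero]
    refine ⟨?_, h0⟩
    rw [Fintype.linearIndependent_iff] at hlin
    ext i
    refine hlin Λ ?_ i
    ext l
    have := hl l
    simpa [h0] using this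
  refine ⟨A, x, fun i => if h : i ∈ A then - Λ ⟨i, h⟩ / (2 * Λ0) else 0, hcard, hxT.1, hA, ?_⟩
  intro l
  rw [← Finset.sum_coe_sort]
  have h1 : ∑ i : A, (if h : (i : ι) ∈ A then - Λ ⟨i, h⟩ / (2 * Λ0) else 0) *
      aeval x (pderiv l (f i)) = - (∑ i, Λ i * aeval x (pderiv l (f i))) / (2 * Λ0) := by
    rw [← Finset.sum_neg_distrib, Finset.sum_div]
    refine Finset.sum_congr rfl fun i _ => ?_
    rw [dif_pos i.2]
    ring
  rw [h1]
  have h2 := hl l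
  have h3 : (∑ i, Λ i * aeval x (pderiv l (f i)) : ℝ) = - (Λ0 * (2 * (x l - p (.inl l)))) := by
    linarith
  rw [h3]
  field_simp
  ring

theorem wr_pderiv_deg {σ : Type} (f : MvPolynomial σ ℚ) (l : σ) :
    (pderiv l f).totalDegree ≤ f.totalDegree := by
  classical
  conv_lhs => rw [f.as_sum, map_sum]
  refine totalDegree_finsetSum_le fun m hm => ?_
  rw [pderiv_monomial]
  refine (totalDegree_monomial_le _ _).trans ?_
  refine le_trans ?_ (le_totalDegree hm)
  change (m - Finsupp.single l 1).degree ≤ m.degree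
  exact Finsupp.degree_mono tsub_le_self

theorem wr_fibre {σ ι : Type} [Fintype σ] [Fintype ι] (f : ι → MvPolynomial σ ℚ) (D : ℕ)
    (hD : ∀ i, (f i).totalDegree ≤ D) (p : σ ⊕ ι → ℝ) (hp : AlgebraicIndependent ℚ p)
    (hpos : ∀ i, 0 < p i) (A : Finset ι) (hAc : A.card ≤ Fintype.card σ) (s : ι → ℚ)
    (hs : ∀ i, s i ≠ 0)
    (F : Finset (ι → ℚ)) (hF : ∀ S ∈ F, ∀ i, S i = 1 ∨ S i = -1)
    (hFs : ∀ S ∈ F, ∀ i ∈ A, S i = s i)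
    (x : (ι → ℚ) → σ → ℝ) (lam : (ι → ℚ) → ι → ℝ)
    (h1 : ∀ S ∈ F, ∀ i, p (.inr i) ≤ S i * aeval (x S) (f i))
    (h2 : ∀ S ∈ F, ∀ i ∈ A, aeval (x S) (f i) = S i * p (.inr i))
    (h3 : ∀ S ∈ F, ∀ l, x S l - ∑ i ∈ A, lam S i * aeval (x S) (pderiv l (f i)) = p (.inl l)) :
    F.card ≤ ((D + 1) ^ 2) ^ Fintype.card σ := by
  classical
  let z : (ι → ℚ) → (σ ⊕ A) → ℝ := fun S => Sum.elim (x S) (fun i => lam S i)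
  have hinj : Set.InjOn z F := by
    intro S hS S' hS' he
    have hx : x S = x S' := by
      ext l
      exact congrFun he (.inl l)
    ext i
    have e1 := h1 S hS i
    have e2 := h1 S' hS' i
    have e3 := hpos (.inr i)
    rw [hx] at e1
    rcases hF S hS i with h | h <;> rcases hF S' hS' i with h' | h' <;> rw [h, h'] <;>
      rw [h] at e1 <;> rw [h'] at e2 <;> push_cast at e1 e2 <;> exfalso <;> linarith
  let Φ : (σ ⊕ A) → MvPolynomial (σ ⊕ A) ℚ := Sum.elim
    (fun l => X (.inl l) - ∑ i : A, X (.inr i) * rename Sum.inl (pderiv l (f i)))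
    (fun i => rename Sum.inl (f i))
  have hΦ : ∀ t, (Φ t).totalDegree ≤ D + 1 := by
    rintro (l | i)
    · refine (totalDegree_sub _ _).trans (max_le ?_ ?_)
      · rw [totalDegree_X]; omega
      · refine totalDegree_finsetSum_le fun i _ => ?_
        refine (totalDegree_mul _ _).trans ?_
        rw [totalDegree_X]
        have e1 := totalDegree_rename_le (Sum.inl : σ → σ ⊕ A) (pderiv l (f i))
        have e2 := wr_pderiv_deg (f i) l
        have e3 := hD i
        omega
    · have e1 := totalDegree_rename_le (Sum.inl : σ → σ ⊕ A) (f i)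
      have e3 := hD i
      exact e1.trans (by omega)
  let s' : σ ⊕ A → ℚ := Sum.elim (fun _ => 1) (fun i => s i)
  have hp' := wr_scale _ (hp.comp (Sum.map id Subtype.val : σ ⊕ A → σ ⊕ ι)
    (Sum.map_injective.2 ⟨Function.injective_id, Subtype.val_injective⟩)) s' (by
      rintro (l | i)
      · exact one_ne_zero
      · exact hs i)
  have hb := wr_bezout Φ (D + 1) hΦ _ hp' (F.image z) (by
    intro w hw t
    obtain ⟨S, hS, rfl⟩ := Finset.mem_image.1 hw
    have hzl : z S ∘ Sum.inl = x S := by ext l; rfl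
    rcases t with l | i
    · have := h3 S hS l
      rw [← Finset.sum_coe_sort] at this
      simp [Φ, s', aeval_rename, hzl]
      simpa [z] using this
    · have := h2 S hS i i.2
      simp [Φ, s', aeval_rename, hzl]
      rw [this, hFs S hS i i.2])
  rw [Finset.card_image_of_injOn hinj] at hb
  refine hb.trans ?_
  rw [← pow_mul]
  refine Nat.pow_le_pow_right (by omega) ?_
  simp
  omega

theorem wr_count {σ ι : Type} [Fintype σ] [Fintype ι] [DecidableEq ι]
    (f : ι → MvPolynomial σ ℚ) (D : ℕ)
    (hD : ∀ i, (f i).totalDegree ≤ D) 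
    (F : Finset (ι → ℚ)) (hF : ∀ S ∈ F, ∀ i, S i = 1 ∨ S i = -1)
    (hx : ∀ S ∈ F, ∃ x : σ → ℝ, ∀ i, 0 < S i * aeval x (f i)) :
    F.card ≤ ((D + 1) ^ 2) ^ Fintype.card σ * (2 ^ Fintype.card σ *
      (Finset.univ.filter fun A : Finset ι => A.card ≤ Fintype.card σ).card) := by
  obtain ⟨η, hη, hη2⟩ : ∃ η : ℝ, 0 < η ∧
      ∀ S ∈ F, ∃ x : σ → ℝ, ∀ i, η < S i * aeval x (f i) := by
    have : ∀ᶠ η in nhdsWithin (0:ℝ) (Set.Ioi 0),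
        0 < η ∧ ∀ S ∈ F, ∃ x : σ → ℝ, ∀ i, η < S i * aeval x (f i) := by
      refine Filter.Eventually.and self_mem_nhdsWithin ?_
      rw [Filter.eventually_all_finset]
      intro S hS
      obtain ⟨x, hx⟩ := hx S hS
      have : ∀ᶠ η in nhdsWithin (0:ℝ) (Set.Ioi 0), ∀ i, η < S i * aeval x (f i) := by
        rw [Filter.eventually_all]
        intro i
        exact nhdsWithin_le_nhds (gt_mem_nhds (hx i))
      exact this.mono fun η h => ⟨x, h⟩
    exact this.exists
  obtain ⟨p, hp, hpη⟩ := wr_generic (σ ⊕ ι) η hη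
  have hk : ∀ S : ι → ℚ, ∃ (A : Finset ι) (x : σ → ℝ) (lam : ι → ℝ), S ∈ F →
      A.card ≤ Fintype.card σ ∧
      (∀ i, p (.inr i) ≤ S i * aeval x (f i)) ∧
      (∀ i ∈ A, aeval x (f i) = S i * p (.inr i)) ∧
      ∀ l, x l - ∑ i ∈ A, lam i * aeval x (pderiv l (f i)) = p (.inl l) := by
    intro S
    by_cases hS : S ∈ F
    · obtain ⟨x, hx⟩ := hη2 S hS
      obtain ⟨A, x, lam, h⟩ := wr_kkt f p hp S (hF S hS)
        ⟨x, fun i => ((hpη _).2.trans (hx i)).le⟩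
      exact ⟨A, x, lam, fun _ => h⟩
    · exact ⟨∅, 0, 0, fun h => absurd h hS⟩
  choose A x lam hk using hk
  let g : (ι → ℚ) → (_ : Finset ι) × Finset ι := fun S =>
    ⟨A S, (A S).filter fun i => S i = 1⟩
  let T : Finset ((_ : Finset ι) × Finset ι) :=
    (Finset.univ.filter fun A : Finset ι => A.card ≤ Fintype.card σ).sigma fun A => A.powerset
  have hT : T.card ≤ 2 ^ Fintype.card σ *
      (Finset.univ.filter fun A : Finset ι => A.card ≤ Fintype.card σ).card := by
    rw [Finset.card_sigma, mul_comm, ← smul_eq_mul]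
    refine Finset.sum_le_card_nsmul _ _ _ fun B hB => ?_
    rw [Finset.card_powerset]
    exact Nat.pow_le_pow_right (by omega) (Finset.mem_filter.1 hB).2
  have hm : ∀ S ∈ F, g S ∈ T := by
    intro S hS
    simp only [T, g, Finset.mem_sigma, Finset.mem_filter, Finset.mem_univ, true_and,
      Finset.mem_powerset]
    exact ⟨(hk S hS).1, Finset.filter_subset _ _⟩
  refine (Finset.card_le_mul_card_image_of_maps_to hm (((D + 1) ^ 2) ^ Fintype.card σ) ?_).trans
    (Nat.mul_le_mul_left _ hT)
  rintro ⟨B, C⟩ hBC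
  have hB : B.card ≤ Fintype.card σ := by
    simp only [T, Finset.mem_sigma, Finset.mem_filter] at hBC
    exact hBC.1.2
  have key : ∀ S ∈ F.filter (fun S => g S = ⟨B, C⟩), S ∈ F ∧ A S = B ∧
      ((A S).filter fun i => S i = 1) = C := by
    intro S hS
    obtain ⟨hS, he⟩ := Finset.mem_filter.1 hS
    simp only [g, Sigma.mk.injEq, heq_eq_eq] at he
    exact ⟨hS, he⟩
  refine wr_fibre f D hD p hp (fun i => (hpη i).1) B hB (fun i => if i ∈ C then 1 else -1)
    (fun i => by split_ifs <;> norm_num) _ (fun S hS => hF S (key S hS).1) ?_ x lam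
    (fun S hS => (hk S (key S hS).1).2.1) ?_ ?_
  · intro S hS i hi
    obtain ⟨k1, k2, k3⟩ := key S hS
    subst k2 k3
    simp only [Finset.mem_filter, hi, true_and]
    rcases hF S k1 i with h | h <;> rw [h] <;> norm_num
  · intro S hS
    obtain ⟨k1, k2, k3⟩ := key S hS
    subst k2
    exact (hk S k1).2.2.1
  · intro S hS
    obtain ⟨k1, k2, k3⟩ := key S hS
    subst k2
    exact (hk S k1).2.2.2

theorem wr_binom {ι : Type} [Fintype ι] [DecidableEq ι] (K : ℕ) (ε : ℝ) (h0 : 0 < ε) (h1 : ε ≤ 1) :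
    ((Finset.univ.filter fun A : Finset ι => A.card ≤ K).card : ℝ) * ε ^ K ≤
      Real.exp (ε * Fintype.card ι) := by
  have e1 : ∑ A : Finset ι, ε ^ A.card = (ε + 1) ^ Fintype.card ι := by
    have := Finset.sum_pow_mul_eq_add_pow ε 1 (Finset.univ : Finset ι)
    simpa using this
  calc ((Finset.univ.filter fun A : Finset ι => A.card ≤ K).card : ℝ) * ε ^ K
      = ∑ A ∈ Finset.univ.filter fun A : Finset ι => A.card ≤ K, ε ^ K := by simp
    _ ≤ ∑ A ∈ Finset.univ.filter fun A : Finset ι => A.card ≤ K, ε ^ A.card := by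
        refine Finset.sum_le_sum fun A hA => ?_
        exact pow_le_pow_of_le_one h0.le h1 (Finset.mem_filter.1 hA).2
    _ ≤ ∑ A : Finset ι, ε ^ A.card :=
        Finset.sum_le_sum_of_subset_of_nonneg (Finset.filter_subset _ _) fun _ _ _ => by positivity
    _ = (ε + 1) ^ Fintype.card ι := e1
    _ ≤ (Real.exp ε) ^ Fintype.card ι := by
        gcongr
        exact Real.add_one_le_exp ε
    _ = _ := by rw [← Real.exp_nat_mul, mul_comm]

theorem wr_final (d K N F B : ℕ) (ε : ℝ) (h0 : 0 < ε) (h1 : ε < 1 / 2)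
    (hK : (K : ℝ) ≤ d * (ε * N)) (hB : (B : ℝ) * ε ^ K ≤ Real.exp (ε * N))
    (hF : F ≤ ((d + 1) ^ 2) ^ K * (2 ^ K * B)) :
    (F : ℝ) ≤ (2 : ℝ) ^ (N * (d * Real.logb 2 (2 * (d + 1) ^ 2) + d + 2) * ε *
      Real.logb 2 (1 / ε)) := by
  have hL : 1 ≤ Real.logb 2 (1 / ε) := by
    rw [Real.le_logb_iff_rpow_le (by norm_num) (by positivity), Real.rpow_one,
      le_div_iff₀ h0]
    linarith
  set L := Real.logb 2 (1 / ε) with hLdef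
  set G := Real.logb 2 (2 * ((d:ℝ) + 1) ^ 2) with hG
  have hG0 : 0 ≤ G := by
    apply Real.logb_nonneg (by norm_num)
    nlinarith [(Nat.cast_nonneg d : (0:ℝ) ≤ d)]
  have p1 : (2:ℝ) ^ (G * K) = (2 * ((d:ℝ) + 1) ^ 2) ^ K := by
    rw [Real.rpow_mul (by norm_num), Real.rpow_logb (by norm_num) (by norm_num) (by positivity),
      Real.rpow_natCast]
  have p2 : (2:ℝ) ^ (L * K) = (1 / ε) ^ K := by
    rw [Real.rpow_mul (by norm_num), Real.rpow_logb (by norm_num) (by norm_num) (by positivity),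
      Real.rpow_natCast]
  have p3 : Real.exp (ε * N) ≤ (2:ℝ) ^ (2 * (ε * N)) := by
    rw [Real.rpow_mul (by norm_num)]
    have hone : Real.exp (ε * N) = Real.exp 1 ^ (ε * N) := by rw [← Real.exp_mul, one_mul]
    rw [hone]
    refine Real.rpow_le_rpow (Real.exp_pos 1).le ?_ (by positivity)
    have := Real.exp_one_lt_d9
    norm_num
    linarith
  have hN : (0:ℝ) ≤ ε * N := by positivity
  calc (F : ℝ) ≤ (((d:ℝ) + 1) ^ 2) ^ K * (2 ^ K * B) := by exact_mod_cast hF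
    _ = (2 * ((d:ℝ) + 1) ^ 2) ^ K * ((1 / ε) ^ K * (B * ε ^ K)) := by
        rw [mul_pow 2, div_pow, one_pow]
        field_simp
    _ ≤ (2 * ((d:ℝ) + 1) ^ 2) ^ K * ((1 / ε) ^ K * (2:ℝ) ^ (2 * (ε * N))) := by
        gcongr
        exact hB.trans p3
    _ = (2:ℝ) ^ (G * K + (L * K + 2 * (ε * N))) := by
        rw [Real.rpow_add (by norm_num), Real.rpow_add (by norm_num), p1, p2]
    _ ≤ _ := by
        refine Real.rpow_le_rpow_of_exponent_le (by norm_num) ?_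
        have a1 : G * K ≤ G * (d * (ε * N)) * L := by
          calc G * K ≤ G * (d * (ε * N)) := by gcongr
            _ ≤ _ := le_mul_of_one_le_right (by positivity) hL
        have a2 : L * K ≤ L * (d * (ε * N)) := by gcongr
        have a3 : 2 * (ε * N) ≤ 2 * (ε * N) * L := le_mul_of_one_le_right (by positivity) hL
        calc _ ≤ G * (d * (ε * N)) * L + (L * (d * (ε * N)) + 2 * (ε * N) * L) := by linarith
          _ = _ := by ring

theorem wr_pad {d : ℕ} (hd : 0 < d) {n : Fin d → ℕ} (T : ((i : Fin d) → Fin (n i)) → ℝ)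
    (m M : ℕ) (hm : m ≤ M) (h : tensorRankLE T m) : tensorRankLE T M := by
  obtain ⟨u, hu⟩ := h
  obtain ⟨k, rfl⟩ := Nat.exists_eq_add_of_le hm
  refine ⟨Fin.append u (fun _ => 0), fun I => ?_⟩
  rw [hu, Fin.sum_univ_add]
  have : ∀ s : Fin k, ∏ i, (0 : (i : Fin d) → Fin (n i) → ℝ) i (I i) = 0 := fun s =>
    Finset.prod_eq_zero (Finset.mem_univ ⟨0, hd⟩) rfl
  simp only [Fin.append_left, Fin.append_right]
  rw [Finset.sum_eq_zero (f := fun s : Fin k => ∏ i, (0 : (i : Fin d) → Fin (n i) → ℝ) i (I i))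
    (fun s _ => this s), add_zero]

theorem wr_main (d : ℕ) (ε : ℝ) (h0 : 0 < ε) (h1 : ε < 1 / 2) (n : Fin d → ℕ) :
    (Nat.card {S : ((i : Fin d) → Fin (n i)) → ℝ | IsSignTensor S ∧
            ∃ m : ℕ, (m : ℝ) ≤ ε * (∏ i, n i : ℕ) / (Finset.univ.sup n : ℕ) ∧
              signumRankLE S m} : ℝ) ≤
      (2 : ℝ) ^ ((∏ i, n i : ℕ) * (d * Real.logb 2 (2 * (d + 1) ^ 2) + d + 2) * ε *
        Real.logb 2 (1 / ε)) := by
  classical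
  let M : ℕ := ⌊ε * (∏ i, n i : ℕ) / (Finset.univ.sup n : ℕ)⌋₊
  let f : ((i : Fin d) → Fin (n i)) → MvPolynomial (Fin M × (Σ i, Fin (n i))) ℚ :=
    fun I => ∑ s, ∏ i, X (s, ⟨i, I i⟩)
  let F : Finset (((i : Fin d) → Fin (n i)) → ℚ) :=
    (Fintype.piFinset fun _ => {1, -1}).filter
      fun S => ∃ x : Fin M × (Σ i, Fin (n i)) → ℝ, ∀ I, 0 < S I * aeval x (f I)
  have hD : ∀ I, (f I).totalDegree ≤ d := by
    intro I
    refine totalDegree_finsetSum_le fun s _ => ?_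
    refine (totalDegree_finsetProd _ _).trans ?_
    simp [totalDegree_X]
  have hsub : Nat.card {S : ((i : Fin d) → Fin (n i)) → ℝ | IsSignTensor S ∧
            ∃ m : ℕ, (m : ℝ) ≤ ε * (∏ i, n i : ℕ) / (Finset.univ.sup n : ℕ) ∧
              signumRankLE S m} ≤ F.card := by
    rw [Nat.card_coe_set_eq]
    refine le_trans ?_ (Finset.card_image_le (s := F) (f := fun S I => ((S I : ℚ) : ℝ)))
    rw [← Set.ncard_coe_finset]
    refine Set.ncard_le_ncard ?_ (Finset.finite_toSet _)
    rintro S ⟨hS, m, hm, T, hT, hTS⟩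
    have hmM : m ≤ M := Nat.le_floor hm
    have hT' : tensorRankLE T M := by
      rcases Nat.eq_zero_or_pos d with rfl | hd
      · have hM : M = 0 := by simp [M]
        have : m = M := by omega
        exact this ▸ hT
      · exact wr_pad hd T m M hmM hT
    obtain ⟨u, hu⟩ := hT'
    refine Finset.mem_coe.2 (Finset.mem_image.2 ⟨fun I => if S I = 1 then 1 else -1, ?_, ?_⟩)
    · refine Finset.mem_filter.2 ⟨?_, fun q => u q.1 q.2.1 q.2.2, fun I => ?_⟩
      · rw [Fintype.mem_piFinset]
        intro I
        split_ifs <;> simp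
      · have e : (aeval (fun q : Fin M × (Σ i, Fin (n i)) => u q.1 q.2.1 q.2.2) (f I) : ℝ)
            = T I := by
          simp [f, hu]
        rw [e]
        obtain ⟨k1, k2⟩ := hTS I
        rcases lt_or_gt_of_ne k1 with h | h
        · rw [Real.sign_of_neg h] at k2
          have k3 : ¬ ((-1 : ℝ) = 1) := by norm_num
          simpa [← k2, k3] using h
        · rw [Real.sign_of_pos h] at k2
          simpa [← k2] using h
    · ext I
      have k3 : ¬ ((-1 : ℝ) = 1) := by norm_num
      rcases hS I with h | h <;> simp [h, k3]
  have hcount := wr_count f d hD F (by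
    intro S hS I
    have := (Fintype.mem_piFinset.1 (Finset.mem_filter.1 hS).1) I
    simpa using this) (fun S hS => (Finset.mem_filter.1 hS).2)
  have hN : Fintype.card ((i : Fin d) → Fin (n i)) = ∏ i, n i := by simp
  have hB := wr_binom (ι := (i : Fin d) → Fin (n i))
    (Fintype.card (Fin M × (Σ i, Fin (n i)))) ε h0 (by linarith)
  rw [hN] at hB
  refine (Nat.cast_le.2 hsub).trans (wr_final d _ _ _ _ ε h0 h1 ?_ hB hcount)
  have c1 : Fintype.card (Fin M × (Σ i, Fin (n i))) ≤ M * (d * Finset.univ.sup n) := by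
    simp only [Fintype.card_prod, Fintype.card_fin, Fintype.card_sigma]
    refine Nat.mul_le_mul_left _ ?_
    have := Finset.sum_le_card_nsmul (Finset.univ : Finset (Fin d)) n (Finset.univ.sup n)
      (fun i hi => Finset.le_sup hi)
    simpa using this
  have c2 : (M : ℝ) * (Finset.univ.sup n : ℕ) ≤ ε * (∏ i, n i : ℕ) := by
    have hM : (M : ℝ) ≤ ε * (∏ i, n i : ℕ) / (Finset.univ.sup n : ℕ) :=
      Nat.floor_le (by positivity)
    rcases Nat.eq_zero_or_pos (Finset.univ.sup n) with hz | hz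
    · rw [hz]
      simp only [Nat.cast_zero, mul_zero]
      positivity
    · exact (le_div_iff₀ (Nat.cast_pos.2 hz)).1 hM
  calc ((Fintype.card (Fin M × (Σ i, Fin (n i))) : ℕ) : ℝ)
      ≤ ((M * (d * Finset.univ.sup n) : ℕ) : ℝ) := Nat.cast_le.2 c1
    _ = d * (M * (Finset.univ.sup n : ℕ)) := by push_cast; ring
    _ ≤ _ := by gcongr

end Helpers

/-- For every `d` there are `c(d), ε₀(d) > 0` such that for `ε ∈ (0, ε₀)` the number of
signum tensors of signum rank at most `ε N / max n_j` is at most `2^{N c ε log₂(1/ε)}`,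
where `N = n₁⋯n_d`. -/
theorem count_tensors_small_signum_rank (d : ℕ) :
    ∃ c : ℝ, 0 < c ∧ ∃ ε₀ : ℝ, 0 < ε₀ ∧
      ∀ ε : ℝ, 0 < ε → ε < ε₀ → ∀ n : Fin d → ℕ,
        (Nat.card {S : ((i : Fin d) → Fin (n i)) → ℝ | IsSignTensor S ∧
            ∃ m : ℕ, (m : ℝ) ≤ ε * (∏ i, n i : ℕ) / (Finset.univ.sup n : ℕ) ∧
              signumRankLE S m} : ℝ) ≤
          (2 : ℝ) ^ ((∏ i, n i : ℕ) * c * ε * Real.logb 2 (1 / ε)) := by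
  refine ⟨d * Real.logb 2 (2 * (d + 1) ^ 2) + d + 2, ?_, 1 / 2, by norm_num, ?_⟩
  · have hG0 : 0 ≤ Real.logb 2 (2 * ((d:ℝ) + 1) ^ 2) := by
      apply Real.logb_nonneg (by norm_num)
      nlinarith [(Nat.cast_nonneg d : (0:ℝ) ≤ d)]
    positivity
  · intro ε h0 h1 n
    exact wr_main d ε h0 h1 n
end
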